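/- arXiv:0711.1402 — 4 statements merged into one kernel-verified Lean document; each statement's English description precedes it below -/
import Mathlib

section
/- Let H be a weak bialgebra over a field k. Then: (1) H_t = ε_t(H) is a unital subalgebra of H (it contains 1 and is closed under multiplication) and a left coideal, i.e. Δ(H_t) ⊆ H ⊗ H_t; (2) H_s = ε_s(H) is a unital subalgebra of H and a right coideal, i.e. Δ(H_s) ⊆ H_s ⊗ H; (3) the subalgebras H_t and H_s commute elementwise: xy = yx for all x ∈ H_t and y ∈ H_s. -/
/-!
Everything is obtained by slicing the legs of (WBA3). With coassociativity, its second form says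
that on the second leg of `Δ(1)` the map `Δ` agrees with `x ↦ Δ(1)(x ⊗ 1)`, and on the first leg
with `y ↦ (1 ⊗ y)Δ(1)`. Slicing away the other leg, the same holds on `H_t` and on `H_s`, and
multiplicativity of `Δ` passes these formulas on to products. Conversely, slicing with `ε` shows
that elements satisfying them are fixed by `ε_t`, resp. `ε_s`, whence closure under multiplication;
it also shows that `Δ(1)` is fixed by `id ⊗ ε_t` and by `ε_s ⊗ id`, so that the formulas give the
coideal properties. Comparing the two forms of (WBA3) shows that `1 ⊗ y` commutes with `Δ(1)` for
`y ∈ H_s`, and slicing the first leg of this relation gives `yx = xy` for `x ∈ H_t`.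
-/

open scoped TensorProduct
open TensorProduct LinearMap

/-- A weak bialgebra over a field `k`: an algebra and coalgebra subject to the
weak compatibility axioms (WBA1)-(WBA3). -/
class WeakBialgebra (k H : Type*) [Field k] [Ring H] [Algebra k H]
    extends Coalgebra k H where
  /-- (WBA1): `Δ(xy) = Δ(x)Δ(y)`. -/
  comul_mul : ∀ x y : H,
    Coalgebra.comul (R := k) (x * y) = Coalgebra.comul (R := k) x * Coalgebra.comul (R := k) y
  /-- (WBA2): `ε(xyz) = Σ ε(xy⁽¹⁾)ε(y⁽²⁾z)`. -/
  counit_mul_mul : ∀ x y z : H,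
    Coalgebra.counit (R := k) (x * y * z) =
      TensorProduct.lid k k
        ((TensorProduct.map (Coalgebra.counit ∘ₗ LinearMap.mulLeft k x)
            (Coalgebra.counit ∘ₗ LinearMap.mulRight k z))
          (Coalgebra.comul (R := k) y))
  /-- (WBA2'): `ε(xyz) = Σ ε(xy⁽²⁾)ε(y⁽¹⁾z)`. -/
  counit_mul_mul' : ∀ x y z : H,
    Coalgebra.counit (R := k) (x * y * z) =
      TensorProduct.lid k k
        ((TensorProduct.map (Coalgebra.counit ∘ₗ LinearMap.mulRight k z)
            (Coalgebra.counit ∘ₗ LinearMap.mulLeft k x))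
          (Coalgebra.comul (R := k) y))
  /-- (WBA3): `((Δ⊗id)∘Δ)(1) = (Δ(1)⊗1)·(1⊗Δ(1))`. -/
  comul_comul_one :
    (TensorProduct.map (Coalgebra.comul (R := k)) (LinearMap.id (M := H)))
        (Coalgebra.comul (R := k) (1 : H)) =
      (Coalgebra.comul (R := k) (1 : H) ⊗ₜ[k] (1 : H)) *
        ((TensorProduct.assoc k H H H).symm ((1 : H) ⊗ₜ[k] Coalgebra.comul (R := k) (1 : H)))
  /-- (WBA3'): `((Δ⊗id)∘Δ)(1) = (1⊗Δ(1))·(Δ(1)⊗1)`. -/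
  comul_comul_one' :
    (TensorProduct.map (Coalgebra.comul (R := k)) (LinearMap.id (M := H)))
        (Coalgebra.comul (R := k) (1 : H)) =
      ((TensorProduct.assoc k H H H).symm ((1 : H) ⊗ₜ[k] Coalgebra.comul (R := k) (1 : H))) *
        (Coalgebra.comul (R := k) (1 : H) ⊗ₜ[k] (1 : H))

variable (k H : Type*) [Field k] [Ring H] [Algebra k H]

/-- The target counital map `ε_t(x) = Σ ε(1⁽¹⁾x)·1⁽²⁾`. -/
noncomputable def εt [WeakBialgebra k H] : H →ₗ[k] H :=
  (TensorProduct.lid k H).toLinearMap ∘ₗ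
    (LinearMap.rTensor H (Coalgebra.counit (R := k) (A := H))) ∘ₗ
    (LinearMap.mulLeft k (Coalgebra.comul (R := k) (1 : H))) ∘ₗ
    ((TensorProduct.mk k H H).flip 1)

/-- The source counital map `ε_s(x) = Σ 1⁽¹⁾·ε(x1⁽²⁾)`. -/
noncomputable def εs [WeakBialgebra k H] : H →ₗ[k] H :=
  (TensorProduct.rid k H).toLinearMap ∘ₗ
    (LinearMap.lTensor H (Coalgebra.counit (R := k) (A := H))) ∘ₗ
    (LinearMap.mulRight k (Coalgebra.comul (R := k) (1 : H))) ∘ₗ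
    (TensorProduct.mk k H H 1)

/-- The target base algebra `H_t = ε_t(H)`. -/
noncomputable def Ht [WeakBialgebra k H] : Submodule k H := LinearMap.range (εt k H)

/-- The source base algebra `H_s = ε_s(H)`. -/
noncomputable def Hs [WeakBialgebra k H] : Submodule k H := LinearMap.range (εs k H)

open Coalgebra

section Slice

variable {R M N P : Type*} [CommSemiring R] [AddCommMonoid M] [Module R M]
  [AddCommMonoid N] [Module R N] [AddCommMonoid P] [Module R P]

/-- The slice map `φ ⊗ id : M ⊗ N → N` of a functional `φ` on the first leg. -/
noncomputable def sliceLeft (φ : M →ₗ[R] R) : M ⊗[R] N →ₗ[R] N :=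
  (TensorProduct.lid R N).toLinearMap ∘ₗ φ.rTensor N

/-- The slice map `id ⊗ φ : M ⊗ N → M` of a functional `φ` on the second leg. -/
noncomputable def sliceRight (φ : N →ₗ[R] R) : M ⊗[R] N →ₗ[R] M :=
  (TensorProduct.rid R M).toLinearMap ∘ₗ φ.lTensor M

@[simp]
theorem sliceLeft_tmul (φ : M →ₗ[R] R) (m : M) (n : N) : sliceLeft φ (m ⊗ₜ[R] n) = φ m • n := by
  simp [sliceLeft]

@[simp]
theorem sliceRight_tmul (φ : N →ₗ[R] R) (m : M) (n : N) : sliceRight φ (m ⊗ₜ[R] n) = φ n • m := by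
  simp [sliceRight]

theorem sliceLeft_lTensor (φ : M →ₗ[R] R) (f : N →ₗ[R] P) (z : M ⊗[R] N) :
    sliceLeft φ (f.lTensor M z) = f (sliceLeft φ z) := by
  induction z <;> simp_all

theorem sliceRight_rTensor (φ : N →ₗ[R] R) (f : M →ₗ[R] P) (z : M ⊗[R] N) :
    sliceRight φ (f.rTensor N z) = f (sliceRight φ z) := by
  induction z <;> simp_all

end Slice

section TensorAlgebra

variable {R A B C : Type*} [CommSemiring R] [Semiring A] [Algebra R A] [Semiring B] [Algebra R B]
  [Semiring C] [Algebra R C]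

theorem sliceLeft_mul_tmul_one (φ : A →ₗ[R] R) (z : A ⊗[R] B) (a : A) :
    sliceLeft φ (z * (a ⊗ₜ 1)) = sliceLeft (φ ∘ₗ mulRight R a) z := by
  induction z <;> simp_all [add_mul]

theorem sliceRight_one_tmul_mul (φ : B →ₗ[R] R) (b : B) (z : A ⊗[R] B) :
    sliceRight φ ((1 ⊗ₜ b) * z) = sliceRight (φ ∘ₗ mulLeft R b) z := by
  induction z <;> simp_all [mul_add]

theorem sliceLeft_mul_one_tmul (φ : A →ₗ[R] R) (z : A ⊗[R] B) (b : B) :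
    sliceLeft φ (z * (1 ⊗ₜ b)) = sliceLeft φ z * b := by
  induction z <;> simp_all [add_mul]

theorem sliceLeft_one_tmul_mul (φ : A →ₗ[R] R) (b : B) (z : A ⊗[R] B) :
    sliceLeft φ ((1 ⊗ₜ b) * z) = b * sliceLeft φ z := by
  induction z <;> simp_all [mul_add]

theorem lTensor_mul_tmul_one (f : B →ₗ[R] C) (z : A ⊗[R] B) (a : A) :
    f.lTensor A (z * (a ⊗ₜ 1)) = f.lTensor A z * (a ⊗ₜ 1) := by
  induction z <;> simp_all [add_mul]

theorem rTensor_one_tmul_mul (f : A →ₗ[R] C) (b : B) (z : A ⊗[R] B) :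
    f.rTensor B ((1 ⊗ₜ b) * z) = (1 ⊗ₜ b) * f.rTensor B z := by
  induction z <;> simp_all [mul_add]

theorem tmul_one_mul_assoc_symm_one_tmul (w : A ⊗[R] B) (z : B ⊗[R] C) :
    (w ⊗ₜ 1) * (TensorProduct.assoc R A B C).symm (1 ⊗ₜ z) =
      (mulLeft R w ∘ₗ TensorProduct.mk R A B 1).rTensor C z := by
  induction z <;> simp_all [tmul_add, mul_add]

theorem assoc_symm_one_tmul_mul_tmul_one (z : B ⊗[R] C) (w : A ⊗[R] B) :
    (TensorProduct.assoc R A B C).symm (1 ⊗ₜ z) * (w ⊗ₜ 1) =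
      (mulRight R w ∘ₗ TensorProduct.mk R A B 1).rTensor C z := by
  induction z <;> simp_all [tmul_add, add_mul]

theorem one_tmul_mul_assoc_tmul_one (w : B ⊗[R] C) (z : A ⊗[R] B) :
    (1 ⊗ₜ w) * TensorProduct.assoc R A B C (z ⊗ₜ 1) =
      (mulLeft R w ∘ₗ (TensorProduct.mk R B C).flip 1).lTensor A z := by
  induction z <;> simp_all [add_tmul, mul_add]

end TensorAlgebra

section Counital

variable (R A : Type*) [CommSemiring R] [Semiring A] [Algebra R A] [Coalgebra R A]

/-- The map `x ↦ Δ(1)(x ⊗ 1)`, to which `Δ` restricts on the target base when (WBA3) holds. -/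
noncomputable def targetComul : A →ₗ[R] A ⊗[R] A :=
  mulLeft R (comul 1) ∘ₗ (TensorProduct.mk R A A).flip 1

/-- The map `y ↦ (1 ⊗ y)Δ(1)`, to which `Δ` restricts on the source base when (WBA3) holds. -/
noncomputable def sourceComul : A →ₗ[R] A ⊗[R] A :=
  mulRight R (comul 1) ∘ₗ TensorProduct.mk R A A 1

/-- The target counital map `x ↦ (ε ⊗ id)(Δ(1)(x ⊗ 1))` of an algebra with a coalgebra structure;
on a weak bialgebra it is `εt` by definition. -/
noncomputable def targetCounital : A →ₗ[R] A := sliceLeft counit ∘ₗ targetComul R A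

/-- The source counital map `y ↦ (id ⊗ ε)((1 ⊗ y)Δ(1))` of an algebra with a coalgebra structure;
on a weak bialgebra it is `εs` by definition. -/
noncomputable def sourceCounital : A →ₗ[R] A := sliceRight counit ∘ₗ sourceComul R A

/-- The target base, the image of the target counital map; on a weak bialgebra it is
`Ht` by definition. -/
noncomputable def targetBase : Submodule R A := LinearMap.range (targetCounital R A)

/-- The source base, the image of the source counital map; on a weak bialgebra it is
`Hs` by definition. -/
noncomputable def sourceBase : Submodule R A := LinearMap.range (sourceCounital R A)

variable {R A}

theorem targetComul_apply (x : A) : targetComul R A x = comul 1 * (x ⊗ₜ 1) := rfl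

theorem sourceComul_apply (y : A) : sourceComul R A y = (1 ⊗ₜ y) * comul 1 := rfl

theorem sliceLeft_counit_comp_comul : sliceLeft counit ∘ₗ comul = (LinearMap.id : A →ₗ[R] A) := by
  ext x
  simp [sliceLeft]

theorem sliceRight_counit_comp_comul : sliceRight counit ∘ₗ comul = (LinearMap.id : A →ₗ[R] A) := by
  ext x
  simp [sliceRight]

theorem targetCounital_eq_slice (x : A) :
    targetCounital R A x = sliceLeft (counit ∘ₗ mulRight R x) (comul 1) :=
  sliceLeft_mul_tmul_one counit (comul 1) x

theorem sourceCounital_eq_slice (y : A) :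
    sourceCounital R A y = sliceRight (counit ∘ₗ mulLeft R y) (comul 1) :=
  sliceRight_one_tmul_mul counit y (comul 1)

theorem mem_targetBase_of_comul_eq {x : A} (hx : comul x = targetComul R A x) :
    x ∈ targetBase R A :=
  ⟨x, calc
    targetCounital R A x = sliceLeft counit (comul (R := R) x) := by rw [hx]; rfl
    _ = x := LinearMap.congr_fun sliceLeft_counit_comp_comul x⟩

theorem mem_sourceBase_of_comul_eq {y : A} (hy : comul y = sourceComul R A y) :
    y ∈ sourceBase R A :=
  ⟨y, calc
    sourceCounital R A y = sliceRight counit (comul (R := R) y) := by rw [hy]; rfl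
    _ = y := LinearMap.congr_fun sliceRight_counit_comp_comul y⟩

theorem one_mem_targetBase : (1 : A) ∈ targetBase R A :=
  mem_targetBase_of_comul_eq <| by
    rw [targetComul_apply, ← Algebra.TensorProduct.one_def, mul_one]

theorem one_mem_sourceBase : (1 : A) ∈ sourceBase R A :=
  mem_sourceBase_of_comul_eq <| by
    rw [sourceComul_apply, ← Algebra.TensorProduct.one_def, one_mul]

end Counital

/-- The compatibility (WBA3), in its two forms, of an algebra structure with a coalgebra structure,
separated from the other axioms of a weak bialgebra. -/
class IsComonoidal (R A : Type*) [CommSemiring R] [Semiring A] [Algebra R A] [Coalgebra R A] :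
    Prop where
  rTensor_comul_comul_one :
    comul.rTensor A (comul (R := R) (1 : A)) =
      (comul 1 ⊗ₜ 1) * (TensorProduct.assoc R A A A).symm (1 ⊗ₜ comul 1)
  rTensor_comul_comul_one' :
    comul.rTensor A (comul (R := R) (1 : A)) =
      (TensorProduct.assoc R A A A).symm (1 ⊗ₜ comul 1) * (comul 1 ⊗ₜ 1)

instance WeakBialgebra.isComonoidal {k H : Type*} [Field k] [Ring H] [Algebra k H]
    [WeakBialgebra k H] : IsComonoidal k H where
  rTensor_comul_comul_one := WeakBialgebra.comul_comul_one
  rTensor_comul_comul_one' := WeakBialgebra.comul_comul_one'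

section Comonoidal

variable {R A : Type*} [CommSemiring R] [Semiring A] [Algebra R A] [Coalgebra R A]
  [IsComonoidal R A]

theorem rTensor_comul_comul_one_eq_mulLeft :
    comul.rTensor A (comul 1) =
      (mulLeft R (comul (R := R) (1 : A)) ∘ₗ TensorProduct.mk R A A 1).rTensor A (comul 1) :=
  IsComonoidal.rTensor_comul_comul_one.trans (tmul_one_mul_assoc_symm_one_tmul _ _)

theorem rTensor_comul_comul_one_eq_sourceComul :
    comul.rTensor A (comul 1) = (sourceComul R A).rTensor A (comul 1) :=
  IsComonoidal.rTensor_comul_comul_one'.trans (assoc_symm_one_tmul_mul_tmul_one _ _)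

theorem lTensor_comul_comul_one_eq_targetComul :
    comul.lTensor A (comul 1) = (targetComul R A).lTensor A (comul 1) :=
  calc comul.lTensor A (comul (R := R) (1 : A))
    _ = TensorProduct.assoc R A A A (comul.rTensor A (comul 1)) := (coassoc_apply 1).symm
    _ = (1 ⊗ₜ comul 1) * TensorProduct.assoc R A A A (comul 1 ⊗ₜ 1) := by
      rw [IsComonoidal.rTensor_comul_comul_one']
      exact (map_mul (Algebra.TensorProduct.assoc R R R A A A) _ _).trans
        (congrArg (· * _) ((TensorProduct.assoc R A A A).apply_symm_apply _))
    _ = (targetComul R A).lTensor A (comul 1) := one_tmul_mul_assoc_tmul_one _ _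

theorem comul_sliceLeft_comul_one (φ : A →ₗ[R] R) :
    comul (sliceLeft φ (comul 1)) = targetComul R A (sliceLeft φ (comul 1)) := by
  rw [← sliceLeft_lTensor, lTensor_comul_comul_one_eq_targetComul, sliceLeft_lTensor]

theorem comul_sliceRight_comul_one (φ : A →ₗ[R] R) :
    comul (sliceRight φ (comul 1)) = sourceComul R A (sliceRight φ (comul 1)) := by
  rw [← sliceRight_rTensor, rTensor_comul_comul_one_eq_sourceComul, sliceRight_rTensor]

theorem comul_sliceRight_comul_one_eq_mul_one_tmul (φ : A →ₗ[R] R) :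
    comul (sliceRight φ (comul 1)) = comul 1 * (1 ⊗ₜ[R] sliceRight φ (comul (1 : A))) := by
  rw [← sliceRight_rTensor, rTensor_comul_comul_one_eq_mulLeft, sliceRight_rTensor]
  rfl

theorem mem_targetBase_iff {x : A} : x ∈ targetBase R A ↔ comul x = targetComul R A x := by
  refine ⟨?_, mem_targetBase_of_comul_eq⟩
  rintro ⟨u, rfl⟩
  rw [targetCounital_eq_slice, comul_sliceLeft_comul_one]

theorem mem_sourceBase_iff {y : A} : y ∈ sourceBase R A ↔ comul y = sourceComul R A y := by
  refine ⟨?_, mem_sourceBase_of_comul_eq⟩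
  rintro ⟨v, rfl⟩
  rw [sourceCounital_eq_slice, comul_sliceRight_comul_one]

theorem mul_mem_targetBase
    (comul_mul : ∀ x y : A, comul (R := R) (x * y) = comul (R := R) x * comul (R := R) y)
    {x y : A} (hx : x ∈ targetBase R A) (hy : y ∈ targetBase R A) : x * y ∈ targetBase R A := by
  rw [mem_targetBase_iff, targetComul_apply] at hx hy ⊢
  calc comul (x * y)
    _ = comul x * (comul 1 * (y ⊗ₜ[R] 1)) := by rw [comul_mul, hy]
    _ = comul x * (y ⊗ₜ[R] 1) := by rw [← mul_assoc, ← comul_mul, mul_one]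
    _ = comul 1 * ((x * y) ⊗ₜ[R] 1) := by
      rw [hx, mul_assoc, Algebra.TensorProduct.tmul_mul_tmul, one_mul]

theorem mul_mem_sourceBase
    (comul_mul : ∀ x y : A, comul (R := R) (x * y) = comul (R := R) x * comul (R := R) y)
    {x y : A} (hx : x ∈ sourceBase R A) (hy : y ∈ sourceBase R A) : x * y ∈ sourceBase R A := by
  rw [mem_sourceBase_iff, sourceComul_apply] at hx hy ⊢
  calc comul (x * y)
    _ = (1 ⊗ₜ[R] x) * comul 1 * comul y := by rw [comul_mul, hx]
    _ = (1 ⊗ₜ[R] x) * comul y := by rw [mul_assoc, ← comul_mul, one_mul]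
    _ = (1 ⊗ₜ[R] (x * y)) * comul 1 := by
      rw [hy, ← mul_assoc, Algebra.TensorProduct.tmul_mul_tmul, one_mul]

theorem lTensor_targetCounital_comul_one :
    (targetCounital R A).lTensor A (comul 1) = comul 1 := by
  rw [targetCounital, lTensor_comp_apply, ← lTensor_comul_comul_one_eq_targetComul,
    ← lTensor_comp_apply, sliceLeft_counit_comp_comul, lTensor_id_apply]

theorem rTensor_sourceCounital_comul_one :
    (sourceCounital R A).rTensor A (comul 1) = comul 1 := by
  rw [sourceCounital, rTensor_comp_apply, ← rTensor_comul_comul_one_eq_sourceComul,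
    ← rTensor_comp_apply, sliceRight_counit_comp_comul, rTensor_id_apply]

theorem comul_mem_range_lTensor_targetBase {x : A} (hx : x ∈ targetBase R A) :
    comul x ∈ LinearMap.range ((targetBase R A).subtype.lTensor A) := by
  rw [targetBase, ← lTensor_range]
  refine ⟨comul x, ?_⟩
  rw [mem_targetBase_iff.mp hx, targetComul_apply, lTensor_mul_tmul_one,
    lTensor_targetCounital_comul_one]

theorem comul_mem_range_rTensor_sourceBase {y : A} (hy : y ∈ sourceBase R A) :
    comul y ∈ LinearMap.range ((sourceBase R A).subtype.rTensor A) := by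
  rw [sourceBase, ← rTensor_range]
  refine ⟨comul y, ?_⟩
  rw [mem_sourceBase_iff.mp hy, sourceComul_apply, rTensor_one_tmul_mul,
    rTensor_sourceCounital_comul_one]

theorem commute_one_tmul_comul_one {y : A} (hy : y ∈ sourceBase R A) :
    Commute ((1 : A) ⊗ₜ[R] y) (comul 1) := by
  obtain ⟨v, rfl⟩ := hy
  rw [sourceCounital_eq_slice]
  exact (comul_sliceRight_comul_one _).symm.trans (comul_sliceRight_comul_one_eq_mul_one_tmul _)

theorem commute_of_mem_targetBase_of_mem_sourceBase {x y : A} (hx : x ∈ targetBase R A)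
    (hy : y ∈ sourceBase R A) : Commute x y := by
  obtain ⟨u, rfl⟩ := hx
  rw [targetCounital_eq_slice, commute_iff_eq, ← sliceLeft_mul_one_tmul,
    ← commute_one_tmul_comul_one hy, sliceLeft_one_tmul_mul]

end Comonoidal

theorem base_algebras_subalgebras_coideals_commute_general {R A : Type*} [CommSemiring R]
    [Semiring A] [Algebra R A] [Coalgebra R A] [IsComonoidal R A]
    (comul_mul : ∀ x y : A, comul (R := R) (x * y) = comul (R := R) x * comul (R := R) y) :
    ((1 : A) ∈ targetBase R A) ∧
    (∀ a ∈ targetBase R A, ∀ b ∈ targetBase R A, a * b ∈ targetBase R A) ∧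
    (∀ x ∈ targetBase R A, comul x ∈ LinearMap.range ((targetBase R A).subtype.lTensor A)) ∧
    ((1 : A) ∈ sourceBase R A) ∧
    (∀ a ∈ sourceBase R A, ∀ b ∈ sourceBase R A, a * b ∈ sourceBase R A) ∧
    (∀ x ∈ sourceBase R A, comul x ∈ LinearMap.range ((sourceBase R A).subtype.rTensor A)) ∧
    (∀ x ∈ targetBase R A, ∀ y ∈ sourceBase R A, x * y = y * x) :=
  ⟨one_mem_targetBase,
    fun _ ha _ hb => mul_mem_targetBase comul_mul ha hb,
    fun _ hx => comul_mem_range_lTensor_targetBase hx,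
    one_mem_sourceBase,
    fun _ ha _ hb => mul_mem_sourceBase comul_mul ha hb,
    fun _ hy => comul_mem_range_rTensor_sourceBase hy,
    fun _ hx _ hy => commute_of_mem_targetBase_of_mem_sourceBase hx hy⟩

/-- In a weak bialgebra over a field: `H_t` is a unital subalgebra
and a left coideal (`Δ(H_t) ⊆ H ⊗ H_t`), `H_s` is a unital subalgebra and a right
coideal (`Δ(H_s) ⊆ H_s ⊗ H`), and `H_t` and `H_s` commute elementwise. -/
theorem base_algebras_subalgebras_coideals_commute [WeakBialgebra k H] :
    ((1 : H) ∈ Ht k H) ∧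
    (∀ a ∈ Ht k H, ∀ b ∈ Ht k H, a * b ∈ Ht k H) ∧
    (∀ x ∈ Ht k H, Coalgebra.comul (R := k) x ∈
      LinearMap.range (LinearMap.lTensor H (Ht k H).subtype)) ∧
    ((1 : H) ∈ Hs k H) ∧
    (∀ a ∈ Hs k H, ∀ b ∈ Hs k H, a * b ∈ Hs k H) ∧
    (∀ x ∈ Hs k H, Coalgebra.comul (R := k) x ∈
      LinearMap.range (LinearMap.rTensor H (Hs k H).subtype)) ∧
    (∀ x ∈ Ht k H, ∀ y ∈ Hs k H, x * y = y * x) :=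
  base_algebras_subalgebras_coideals_commute_general WeakBialgebra.comul_mul
end

section
/- Let H be a weak Hopf algebra over a field k. Then for all x ∈ H, Σ ε_s(x⁽²⁾) ⊗ S(x⁽¹⁾)x⁽³⁾ = Δ(ε_s(x)) in H⊗H, and for every h ∈ H_s and every y ∈ H, Σ ε(hy⁽²⁾)·y⁽¹⁾S(y⁽³⁾) = h·ε_t(y). -/
/-!
Two consequences of the second form of (WBA3), `1⁽¹⁾ ⊗ 1⁽²⁾ ⊗ 1⁽³⁾ = (1 ⊗ Δ(1))(Δ(1) ⊗ 1)`,
carry the argument: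

* contracting the third leg with `ε(x ·)` gives `Δ(ε_s(x)) = (1 ⊗ ε_s(x))Δ(1)`;
* multiplying on the left by `1 ⊗ Δ(x)` and contracting the second leg with `ε` gives
  `Σ ε_s(x⁽¹⁾) ⊗ x⁽²⁾ = (1 ⊗ x)Δ(1)`.

By the second fact `Σ ε_s(x⁽²⁾) ⊗ S(x⁽¹⁾)x⁽³⁾ = Σ (1 ⊗ S(x⁽¹⁾)x⁽²⁾)Δ(1) = (1 ⊗ ε_s(x))Δ(1)`,
which is `Δ(ε_s(x))` by the first. The first also gives `Δ(hy) = (1 ⊗ h)Δ(y)` for `h ∈ H_s`, so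
`Σ y⁽¹⁾ε(hy⁽²⁾) = hy`, whence `Σ ε(hy⁽²⁾)y⁽¹⁾S(y⁽³⁾) = Σ hy⁽¹⁾S(y⁽²⁾) = hε_t(y)`.
-/

open scoped TensorProduct
open TensorProduct LinearMap

variable (k H : Type*) [Field k] [Ring H] [Algebra k H]

/-- A weak Hopf algebra: a weak bialgebra with an antipode `S` satisfying
`Σ x⁽¹⁾S(x⁽²⁾) = ε_t(x)`, `Σ S(x⁽¹⁾)x⁽²⁾ = ε_s(x)` and `Σ S(x⁽¹⁾)x⁽²⁾S(x⁽³⁾) = S(x)`. -/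
class WeakHopfAlgebra extends WeakBialgebra k H where
  antipode : H →ₗ[k] H
  mul_antipode : ∀ x : H,
    LinearMap.mul' k H ((LinearMap.lTensor H antipode) (Coalgebra.comul (R := k) x)) = εt k H x
  antipode_mul : ∀ x : H,
    LinearMap.mul' k H ((LinearMap.rTensor H antipode) (Coalgebra.comul (R := k) x)) = εs k H x
  antipode_mul_antipode : ∀ x : H,
    LinearMap.mul' k H
      ((TensorProduct.map antipode (LinearMap.mul' k H ∘ₗ LinearMap.lTensor H antipode))
        ((LinearMap.lTensor H (Coalgebra.comul (R := k)))
          (Coalgebra.comul (R := k) x))) = antipode x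

/-- The antipode of a weak Hopf algebra, as a linear map. -/
noncomputable def aS [WeakHopfAlgebra k H] : H →ₗ[k] H :=
  WeakHopfAlgebra.antipode (k := k) (H := H)

section Slice

variable {R A B C M N P : Type*} [CommSemiring R]
  [Semiring A] [Algebra R A] [Semiring B] [Algebra R B] [Semiring C] [Algebra R C]
  [AddCommMonoid M] [Module R M] [AddCommMonoid N] [Module R N] [AddCommMonoid P] [Module R P]

/-- The left slice map `m ⊗ n ↦ φ(m)n`, contracting the left leg of a tensor with a functional. -/
noncomputable def leftSlice (φ : M →ₗ[R] R) : M ⊗[R] N →ₗ[R] N :=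
  (TensorProduct.lid R N).toLinearMap ∘ₗ rTensor N φ

/-- The right slice map `m ⊗ n ↦ φ(n)m`, contracting the right leg of a tensor with a functional. -/
noncomputable def rightSlice (φ : N →ₗ[R] R) : M ⊗[R] N →ₗ[R] M :=
  (TensorProduct.rid R M).toLinearMap ∘ₗ lTensor M φ

@[simp]
lemma leftSlice_tmul (φ : M →ₗ[R] R) (m : M) (n : N) : leftSlice φ (m ⊗ₜ[R] n) = φ m • n := by
  simp [leftSlice]

@[simp]
lemma rightSlice_tmul (φ : N →ₗ[R] R) (m : M) (n : N) : rightSlice φ (m ⊗ₜ[R] n) = φ n • m := by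
  simp [rightSlice]

lemma rightSlice_rTensor (φ : N →ₗ[R] R) (f : M →ₗ[R] P) (t : M ⊗[R] N) :
    rightSlice φ (rTensor N f t) = f (rightSlice φ t) := by
  induction t with
  | zero => simp
  | add s t hs ht => simp only [map_add, hs, ht]
  | tmul m n => simp

lemma rightSlice_comp_mulLeft (φ : B →ₗ[R] R) (b : B) (t : A ⊗[R] B) :
    rightSlice (φ ∘ₗ mulLeft R b) t = rightSlice φ ((1 ⊗ₜ[R] b) * t) := by
  induction t with
  | zero => simp
  | add s t hs ht => simp only [map_add, mul_add, hs, ht]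
  | tmul a c => simp

lemma rightSlice_one_tmul_mul_tmul_one (φ : C →ₗ[R] R) (s : B ⊗[R] C) (t : A ⊗[R] B) :
    rightSlice φ ((TensorProduct.assoc R A B C).symm (1 ⊗ₜ[R] s) * (t ⊗ₜ[R] 1)) =
      (1 ⊗ₜ[R] rightSlice φ s) * t := by
  induction s with
  | zero => simp
  | add s s' hs hs' => simp only [map_add, add_mul, tmul_add, hs, hs']
  | tmul b c =>
    induction t with
    | zero => simp
    | add t t' ht ht' => simp only [map_add, mul_add, add_tmul, ht, ht']
    | tmul a b' => simp

lemma lTensor_leftSlice_one_tmul_mul_assoc (φ : B →ₗ[R] R) (b : B) (c : C) (t : A ⊗[R] B) :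
    lTensor A (leftSlice φ)
        ((1 ⊗ₜ[R] (b ⊗ₜ[R] c)) * TensorProduct.assoc R A B C (t ⊗ₜ[R] 1)) =
      rightSlice (φ ∘ₗ mulLeft R b) t ⊗ₜ[R] c := by
  induction t with
  | zero => simp
  | add s t hs ht => simp only [map_add, mul_add, add_tmul, hs, ht]
  | tmul a b' => simp [smul_tmul]

lemma map_mul'_rTensor_assoc_comm (g : M →ₗ[R] B) (f : N →ₗ[R] A) (n : N) (t : M ⊗[R] A) :
    TensorProduct.map g (mul' R A ∘ₗ rTensor A f ∘ₗ (TensorProduct.comm R A N).toLinearMap)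
        (TensorProduct.assoc R M A N (TensorProduct.comm R N (M ⊗[R] A) (n ⊗ₜ[R] t))) =
      (1 ⊗ₜ[R] f n) * rTensor A g t := by
  induction t with
  | zero => simp
  | add s t hs ht => simp only [map_add, mul_add, tmul_add, hs, ht]
  | tmul m a => simp

lemma mul'_lTensor_lid_map_assoc (φ : N →ₗ[R] R) (f : P →ₗ[R] A) (t : A ⊗[R] N) (p : P) :
    mul' R A (lTensor A ((TensorProduct.lid R A).toLinearMap ∘ₗ TensorProduct.map φ f)
        (TensorProduct.assoc R A N P (t ⊗ₜ[R] p))) =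
      rightSlice φ t * f p := by
  induction t with
  | zero => simp
  | add s t hs ht => simp only [map_add, add_mul, add_tmul, hs, ht]
  | tmul a n => simp

end Slice

section Coalgebra

variable {R C M : Type*} [CommSemiring R] [AddCommMonoid C] [Module R C] [Coalgebra R C]
  [AddCommMonoid M] [Module R M]

lemma lTensor_leftSlice_counit_lTensor_comul (t : M ⊗[R] C) :
    lTensor M (leftSlice (Coalgebra.counit (R := R) (A := C)))
      (lTensor M (Coalgebra.comul (R := R)) t) = t := by
  induction t with
  | zero => simp
  | add s t hs ht => simp only [map_add, hs, ht]
  | tmul m c => simp [leftSlice]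

lemma rightSlice_counit_comul (c : C) :
    rightSlice (Coalgebra.counit (R := R) (A := C)) (Coalgebra.comul (R := R) c) = c := by
  simp [rightSlice]

end Coalgebra

section WeakBialgebra

variable {k H} [WeakBialgebra k H] {A M : Type*} [Semiring A] [Algebra k A]
  [AddCommMonoid M] [Module k M]

lemma comul_mul_comul_one (x : H) :
    Coalgebra.comul (R := k) x * Coalgebra.comul (R := k) (1 : H) = Coalgebra.comul (R := k) x := by
  rw [← WeakBialgebra.comul_mul, mul_one]

lemma comul_one_mul_comul (x : H) :
    Coalgebra.comul (R := k) (1 : H) * Coalgebra.comul (R := k) x = Coalgebra.comul (R := k) x := by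
  rw [← WeakBialgebra.comul_mul, one_mul]

lemma lTensor_comul_one_tmul_mul (x : H) (t : A ⊗[k] H) :
    lTensor A (Coalgebra.comul (R := k)) ((1 ⊗ₜ[k] x) * t) =
      (1 ⊗ₜ[k] Coalgebra.comul (R := k) x) * lTensor A (Coalgebra.comul (R := k)) t := by
  induction t with
  | zero => simp
  | add s t hs ht => simp only [map_add, mul_add, hs, ht]
  | tmul a y => simp [WeakBialgebra.comul_mul]

lemma lTensor_comul_comul_one :
    lTensor H (Coalgebra.comul (R := k)) (Coalgebra.comul (R := k) (1 : H)) =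
      (1 ⊗ₜ[k] Coalgebra.comul (R := k) (1 : H)) *
        TensorProduct.assoc k H H H (Coalgebra.comul (R := k) (1 : H) ⊗ₜ[k] 1) := by
  let assocAlg := Algebra.TensorProduct.assoc k k k H H H
  calc
    _ = assocAlg (rTensor H (Coalgebra.comul (R := k)) (Coalgebra.comul (R := k) (1 : H))) :=
      (Coalgebra.coassoc_apply (R := k) (1 : H)).symm
    _ = assocAlg (assocAlg.symm (1 ⊗ₜ[k] Coalgebra.comul (R := k) (1 : H)) *
        (Coalgebra.comul (R := k) (1 : H) ⊗ₜ[k] 1)) :=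
      congrArg assocAlg WeakBialgebra.comul_comul_one'
    _ = _ := by
      rw [map_mul, AlgEquiv.apply_symm_apply]
      rfl

lemma εs_eq_rightSlice_comul_one (x : H) :
    εs k H x = rightSlice (Coalgebra.counit (R := k) ∘ₗ mulLeft k x)
      (Coalgebra.comul (R := k) (1 : H)) :=
  (rightSlice_comp_mulLeft _ _ _).symm

lemma comul_εs (x : H) :
    Coalgebra.comul (R := k) (εs k H x) =
      (1 ⊗ₜ[k] εs k H x) * Coalgebra.comul (R := k) (1 : H) := by
  have sliced := congrArg (rightSlice (Coalgebra.counit (R := k) ∘ₗ mulLeft k x))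
    (WeakBialgebra.comul_comul_one' (k := k) (H := H))
  rwa [← rTensor_def, rightSlice_rTensor, rightSlice_one_tmul_mul_tmul_one,
    ← εs_eq_rightSlice_comul_one] at sliced

lemma rTensor_εs (t : H ⊗[k] H) :
    rTensor H (εs k H) t =
      lTensor H (leftSlice (Coalgebra.counit (R := k)))
        ((1 ⊗ₜ[k] t) * TensorProduct.assoc k H H H (Coalgebra.comul (R := k) (1 : H) ⊗ₜ[k] 1)) := by
  induction t with
  | zero => simp
  | add s t hs ht => simp only [map_add, tmul_add, add_mul, hs, ht]
  | tmul a b =>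
    rw [lTensor_leftSlice_one_tmul_mul_assoc, ← εs_eq_rightSlice_comul_one, rTensor_tmul]

lemma rTensor_εs_comul (x : H) :
    rTensor H (εs k H) (Coalgebra.comul (R := k) x) =
      (1 ⊗ₜ[k] x) * Coalgebra.comul (R := k) (1 : H) := by
  have lTensor_comul : lTensor H (Coalgebra.comul (R := k))
        ((1 ⊗ₜ[k] x) * Coalgebra.comul (R := k) (1 : H)) =
      (1 ⊗ₜ[k] Coalgebra.comul (R := k) x) *
        TensorProduct.assoc k H H H (Coalgebra.comul (R := k) (1 : H) ⊗ₜ[k] 1) := by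
    rw [lTensor_comul_one_tmul_mul, lTensor_comul_comul_one, ← mul_assoc,
      Algebra.TensorProduct.tmul_mul_tmul, mul_one, comul_mul_comul_one]
  rw [rTensor_εs, ← lTensor_comul, lTensor_leftSlice_counit_lTensor_comul]

lemma comul_mul_of_mem_Hs {h : H} (hh : h ∈ Hs k H) (y : H) :
    Coalgebra.comul (R := k) (h * y) = (1 ⊗ₜ[k] h) * Coalgebra.comul (R := k) y := by
  obtain ⟨x, rfl⟩ := hh
  rw [WeakBialgebra.comul_mul, comul_εs, mul_assoc, comul_one_mul_comul]

lemma rightSlice_counit_mulLeft_comul_of_mem_Hs {h : H} (hh : h ∈ Hs k H) (y : H) :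
    rightSlice (Coalgebra.counit (R := k) ∘ₗ mulLeft k h) (Coalgebra.comul (R := k) y) =
      h * y := by
  rw [rightSlice_comp_mulLeft, ← comul_mul_of_mem_Hs hh, rightSlice_counit_comul]

lemma map_εs_mul'_rTensor_lTensor_comul (f : M →ₗ[k] H) (t : M ⊗[k] H) :
    TensorProduct.map (εs k H)
        (mul' k H ∘ₗ rTensor H f ∘ₗ (TensorProduct.comm k H M).toLinearMap)
        (TensorProduct.assoc k H H M (TensorProduct.comm k M (H ⊗[k] H)
          (lTensor M (Coalgebra.comul (R := k)) t))) =
      (1 ⊗ₜ[k] mul' k H (rTensor H f t)) * Coalgebra.comul (R := k) (1 : H) := by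
  induction t with
  | zero => simp
  | add s t hs ht => simp only [map_add, add_mul, tmul_add, hs, ht]
  | tmul m x =>
    rw [lTensor_tmul, map_mul'_rTensor_assoc_comm, rTensor_εs_comul, ← mul_assoc,
      Algebra.TensorProduct.tmul_mul_tmul, mul_one, rTensor_tmul, mul'_apply]

lemma mul'_lTensor_counit_mulLeft_rTensor_comul {h : H} (hh : h ∈ Hs k H) (f : M →ₗ[k] H)
    (t : H ⊗[k] M) :
    mul' k H (lTensor H ((TensorProduct.lid k H).toLinearMap ∘ₗ
          TensorProduct.map (Coalgebra.counit (R := k) ∘ₗ mulLeft k h) f)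
        (TensorProduct.assoc k H H M (rTensor M (Coalgebra.comul (R := k)) t))) =
      h * mul' k H (lTensor H f t) := by
  induction t with
  | zero => simp
  | add s t hs ht => simp only [map_add, mul_add, hs, ht]
  | tmul x m =>
    rw [rTensor_tmul, mul'_lTensor_lid_map_assoc, rightSlice_counit_mulLeft_comul_of_mem_Hs hh,
      mul_assoc, lTensor_tmul, mul'_apply]

/-- When `f` is the antipode, `comul_εs` identifies the right-hand side of the first identity with
`Δ(ε_s(x))`. -/
theorem antipode_source_identities_general (f : H →ₗ[k] H) :
    (∀ x : H,
      TensorProduct.map (εs k H)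
          (mul' k H ∘ₗ rTensor H f ∘ₗ (TensorProduct.comm k H H).toLinearMap)
          (TensorProduct.assoc k H H H (TensorProduct.comm k H (H ⊗[k] H)
            (lTensor H (Coalgebra.comul (R := k)) (Coalgebra.comul (R := k) x)))) =
        (1 ⊗ₜ[k] mul' k H (rTensor H f (Coalgebra.comul (R := k) x))) *
          Coalgebra.comul (R := k) (1 : H)) ∧
    (∀ h ∈ Hs k H, ∀ y : H,
      mul' k H (lTensor H ((TensorProduct.lid k H).toLinearMap ∘ₗ
            TensorProduct.map (Coalgebra.counit (R := k) ∘ₗ mulLeft k h) f)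
          (lTensor H (Coalgebra.comul (R := k)) (Coalgebra.comul (R := k) y))) =
        h * mul' k H (lTensor H f (Coalgebra.comul (R := k) y))) := by
  refine ⟨fun x ↦ map_εs_mul'_rTensor_lTensor_comul f _, fun h hh y ↦ ?_⟩
  rw [← Coalgebra.coassoc_apply, mul'_lTensor_counit_mulLeft_rTensor_comul hh]

end WeakBialgebra

/-- In a weak Hopf algebra over a field:
`Σ ε_s(x⁽²⁾) ⊗ S(x⁽¹⁾)x⁽³⁾ = Δ(ε_s(x))`, and for `h ∈ H_s`,
`Σ ε(hy⁽²⁾)·y⁽¹⁾S(y⁽³⁾) = h·ε_t(y)`. -/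
theorem antipode_source_identities [WeakHopfAlgebra k H] :
    (∀ x : H,
      (TensorProduct.map (εs k H)
          (LinearMap.mul' k H ∘ₗ LinearMap.rTensor H (aS k H) ∘ₗ
            (TensorProduct.comm k H H).toLinearMap))
        ((TensorProduct.assoc k H H H)
          ((TensorProduct.comm k H (H ⊗[k] H))
            ((LinearMap.lTensor H (Coalgebra.comul (R := k) (A := H)))
              (Coalgebra.comul (R := k) x)))) =
      Coalgebra.comul (R := k) (εs k H x)) ∧
    (∀ h ∈ Hs k H, ∀ y : H,
      LinearMap.mul' k H
        ((LinearMap.lTensor H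
            ((TensorProduct.lid k H).toLinearMap ∘ₗ
              TensorProduct.map ((Coalgebra.counit (R := k) (A := H)) ∘ₗ LinearMap.mulLeft k h)
                (aS k H)))
          ((LinearMap.lTensor H (Coalgebra.comul (R := k) (A := H)))
            (Coalgebra.comul (R := k) y))) =
      h * εt k H y) := by
  obtain ⟨comul_identity, mul_identity⟩ := antipode_source_identities_general (aS k H)
  exact ⟨fun x ↦ by rw [comul_identity, comul_εs, aS, WeakHopfAlgebra.antipode_mul],
    fun h hh y ↦ by rw [mul_identity h hh, aS, WeakHopfAlgebra.mul_antipode]⟩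
end

section
/- Let H be a weak bialgebra over a field k and let (V, β_V), (W, β_W) be right H-comodules. Define the linear map P_{V,W} : V⊗W → V⊗W by P_{V,W}(v⊗w) = Σ (v_V ⊗ w_W)·ε(v_H·w_H). Then P_{V,W} is idempotent (P_{V,W}∘P_{V,W} = P_{V,W}), the linear map β : V⊗W → (V⊗W)⊗H, v⊗w ↦ Σ (v_V⊗w_W)⊗(v_H·w_H), maps the image V⊗̂W = P_{V,W}(V⊗W) into (V⊗̂W)⊗H, and its restriction makes V⊗̂W a right H-comodule. -/
/-!
The map `β = coactTrunc` is coassociative on all of `V ⊗ W` because `Δ(xy) = Δ(x)Δ(y)`, and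
`P = (id ⊗ ε) ∘ β`. Contracting the two legs of `Δ` in
`(β ⊗ id) ∘ β = (id ⊗ Δ) ∘ β` with `ε` gives `β ∘ P = β` and `(P ⊗ id) ∘ β = β`. The first
identity yields `P ∘ P = P`; by the second, `β` takes values in `(range P) ⊗ H`; by both, the
corestriction of `P` is a surjection `V ⊗ W → range P` compatible with the coactions. Along it
coassociativity descends, and `(id ⊗ ε) ∘ β = P` becomes the counit law, since `P` is the identity
on its range.
-/

open scoped TensorProduct
open TensorProduct LinearMap

variable (k H : Type*) [Field k] [Ring H] [Algebra k H]

section Truncated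

variable {k H : Type*} [Field k] [Ring H] [Algebra k H] [WeakBialgebra k H]
variable {V W : Type*} [AddCommGroup V] [Module k V] [AddCommGroup W] [Module k W]

variable (k) in
/-- The idempotent `P_{V,W}(v⊗w) = Σ (v_V ⊗ w_W)·ε(v_H·w_H)` on `V ⊗ W`,
whose image is the truncated tensor product `V ⊗̂ W`. -/
noncomputable def Ptrunc (βV : V →ₗ[k] V ⊗[k] H) (βW : W →ₗ[k] W ⊗[k] H) :
    (V ⊗[k] W) →ₗ[k] V ⊗[k] W :=
  (TensorProduct.rid k (V ⊗[k] W)).toLinearMap ∘ₗ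
    (LinearMap.lTensor (V ⊗[k] W) ((Coalgebra.counit (R := k) (A := H)) ∘ₗ LinearMap.mul' k H)) ∘ₗ
    (TensorProduct.tensorTensorTensorComm k V H W H).toLinearMap ∘ₗ
    (TensorProduct.map βV βW)

variable (k) in
/-- The coaction `v⊗w ↦ Σ (v_V ⊗ w_W) ⊗ (v_H·w_H)` on `V ⊗ W`, restricting to the
coaction of the truncated tensor product `V ⊗̂ W`. -/
noncomputable def coactTrunc (βV : V →ₗ[k] V ⊗[k] H) (βW : W →ₗ[k] W ⊗[k] H) :
    (V ⊗[k] W) →ₗ[k] (V ⊗[k] W) ⊗[k] H :=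
  (LinearMap.lTensor (V ⊗[k] W) (LinearMap.mul' k H)) ∘ₗ
    (TensorProduct.tensorTensorTensorComm k V H W H).toLinearMap ∘ₗ
    (TensorProduct.map βV βW)

variable (k) in
/-- The ambient form of the left unit constraint: `h ⊗ v ↦ Σ v_V·ε(h·v_H)`. -/
noncomputable def lamAmb (βV : V →ₗ[k] V ⊗[k] H) : H ⊗[k] V →ₗ[k] V :=
  (TensorProduct.rid k V).toLinearMap ∘ₗ
    (LinearMap.lTensor V ((Coalgebra.counit (R := k) (A := H)) ∘ₗ LinearMap.mul' k H)) ∘ₗ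
    (TensorProduct.assoc k V H H).toLinearMap ∘ₗ
    (LinearMap.rTensor H (TensorProduct.comm k H V).toLinearMap) ∘ₗ
    ((TensorProduct.assoc k H V H).symm.toLinearMap) ∘ₗ
    (LinearMap.lTensor H βV)

variable (k) in
/-- The ambient form of the inverse left unit constraint:
`v ↦ Σ (1⁽¹⁾ ⊗ v_V)·ε(1⁽²⁾·v_H)`. -/
noncomputable def lamInvAmb (βV : V →ₗ[k] V ⊗[k] H) : V →ₗ[k] H ⊗[k] V :=
  (TensorProduct.rid k (H ⊗[k] V)).toLinearMap ∘ₗ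
    (LinearMap.lTensor (H ⊗[k] V) ((Coalgebra.counit (R := k) (A := H)) ∘ₗ LinearMap.mul' k H)) ∘ₗ
    (TensorProduct.tensorTensorTensorComm k H H V H).toLinearMap ∘ₗ
    ((TensorProduct.mk k (H ⊗[k] H) (V ⊗[k] H)) (Coalgebra.comul (R := k) (1 : H))) ∘ₗ βV

variable (k) in
/-- The ambient form of the right unit constraint: `v ⊗ h ↦ Σ v_V·ε(v_H·h)`. -/
noncomputable def rhoAmb (βV : V →ₗ[k] V ⊗[k] H) : V ⊗[k] H →ₗ[k] V :=
  (TensorProduct.rid k V).toLinearMap ∘ₗ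
    (LinearMap.lTensor V ((Coalgebra.counit (R := k) (A := H)) ∘ₗ LinearMap.mul' k H)) ∘ₗ
    (TensorProduct.assoc k V H H).toLinearMap ∘ₗ
    (LinearMap.rTensor H βV)

variable (k) in
/-- The ambient form of the inverse right unit constraint: `v ↦ Σ v_V ⊗ ε_s(v_H)`. -/
noncomputable def rhoInvAmb (βV : V →ₗ[k] V ⊗[k] H) : V →ₗ[k] V ⊗[k] H :=
  (LinearMap.lTensor V (εs k H)) ∘ₗ βV

end Truncated

section Coaction

variable {R C M N : Type*} [CommSemiring R] [AddCommMonoid C] [Module R C] [Coalgebra R C]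
  [AddCommMonoid M] [Module R M] [AddCommMonoid N] [Module R N]

variable (R C M) in
/-- The map `id ⊗ ε : M ⊗ C → M`, with `M ⊗ R` identified with `M`. -/
noncomputable def contractCounit : M ⊗[R] C →ₗ[R] M :=
  (TensorProduct.rid R M).toLinearMap ∘ₗ lTensor M Coalgebra.counit

@[simp]
theorem contractCounit_tmul (m : M) (c : C) :
    contractCounit R C M (m ⊗ₜ c) = Coalgebra.counit (R := R) c • m := by
  simp [contractCounit]

theorem contractCounit_rTensor (f : M →ₗ[R] N) (t : M ⊗[R] C) :
    contractCounit R C N (rTensor C f t) = f (contractCounit R C M t) := by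
  suffices contractCounit R C N ∘ₗ rTensor C f = f ∘ₗ contractCounit R C M from
    LinearMap.congr_fun this t
  ext m c
  simp

theorem contractCounit_assoc_symm (t : M ⊗[R] (C ⊗[R] C)) :
    contractCounit R C (M ⊗[R] C) ((TensorProduct.assoc R M C C).symm t) =
      lTensor M (contractCounit R C C) t := by
  suffices contractCounit R C (M ⊗[R] C) ∘ₗ (TensorProduct.assoc R M C C).symm.toLinearMap =
      lTensor M (contractCounit R C C) from LinearMap.congr_fun this t
  ext m c d
  simp

theorem contractCounit_comp_comul :
    contractCounit R C C ∘ₗ Coalgebra.comul = LinearMap.id := by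
  ext c
  simp [contractCounit]

theorem contractCounit_assoc_symm_lTensor_comul (t : M ⊗[R] C) :
    contractCounit R C (M ⊗[R] C)
      ((TensorProduct.assoc R M C C).symm (lTensor M Coalgebra.comul t)) = t := by
  rw [contractCounit_assoc_symm, ← lTensor_comp_apply, contractCounit_comp_comul, lTensor_id_apply]

theorem rTensor_contractCounit_assoc_symm (t : M ⊗[R] (C ⊗[R] C)) :
    rTensor C (contractCounit R C M) ((TensorProduct.assoc R M C C).symm t) =
      lTensor M (lift (lsmul R C ∘ₗ Coalgebra.counit)) t := by
  suffices rTensor C (contractCounit R C M) ∘ₗ (TensorProduct.assoc R M C C).symm.toLinearMap =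
      lTensor M (lift (lsmul R C ∘ₗ Coalgebra.counit)) from LinearMap.congr_fun this t
  ext m c d
  simp [smul_tmul]

theorem rTensor_contractCounit_assoc_symm_lTensor_comul (t : M ⊗[R] C) :
    rTensor C (contractCounit R C M)
      ((TensorProduct.assoc R M C C).symm (lTensor M Coalgebra.comul t)) = t := by
  rw [rTensor_contractCounit_assoc_symm, ← lTensor_comp_apply,
    Coalgebra.lift_lsmul_comp_counit_comp_comul, lTensor_id_apply]

/-- Coassociativity of a linear map `β : M → M ⊗ C`, that is `(β ⊗ id) ∘ β = (id ⊗ Δ) ∘ β`. A right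
`C`-comodule is an `M` with such a `β` for which moreover `(id ⊗ ε) ∘ β = id`. -/
def IsCoassociative (β : M →ₗ[R] M ⊗[R] C) : Prop :=
  ∀ m, TensorProduct.assoc R M C C (rTensor C β (β m)) = lTensor M Coalgebra.comul (β m)

/-- The endomorphism `(id ⊗ ε) ∘ β` of `M`, which measures how far `β : M → M ⊗ C` is from being
counital. -/
noncomputable def counitEnd (β : M →ₗ[R] M ⊗[R] C) : M →ₗ[R] M :=
  contractCounit R C M ∘ₗ β

theorem counitEnd_apply_of_intertwines {β : M →ₗ[R] M ⊗[R] C} {γ : N →ₗ[R] N ⊗[R] C}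
    {f : M →ₗ[R] N} (hf : ∀ m, γ (f m) = rTensor C f (β m)) (m : M) :
    counitEnd γ (f m) = f (counitEnd β m) := by
  simp only [counitEnd, comp_apply, hf, contractCounit_rTensor]

/-- The coaction `(P ⊗ id) ∘ β` on the range of `P = counitEnd β`. -/
noncomputable def rangeCoaction (β : M →ₗ[R] M ⊗[R] C) :
    range (counitEnd β) →ₗ[R] range (counitEnd β) ⊗[R] C :=
  rTensor C (counitEnd β).rangeRestrict ∘ₗ β ∘ₗ (range (counitEnd β)).subtype

namespace IsCoassociative

theorem rTensor_apply_eq_assoc_symm {β : M →ₗ[R] M ⊗[R] C} (hβ : IsCoassociative β) (m : M) :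
    rTensor C β (β m) =
      (TensorProduct.assoc R M C C).symm (lTensor M Coalgebra.comul (β m)) :=
  (LinearEquiv.eq_symm_apply _).mpr (hβ m)

theorem of_surjective {β : M →ₗ[R] M ⊗[R] C} {γ : N →ₗ[R] N ⊗[R] C} {f : M →ₗ[R] N}
    (hβ : IsCoassociative β) (hsurj : Function.Surjective f)
    (hf : ∀ m, γ (f m) = rTensor C f (β m)) : IsCoassociative γ := by
  intro n
  obtain ⟨m, rfl⟩ := hsurj n
  have hγf : γ ∘ₗ f = rTensor C f ∘ₗ β := LinearMap.ext hf
  calc TensorProduct.assoc R N C C (rTensor C γ (γ (f m)))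
      = TensorProduct.assoc R N C C (rTensor C (rTensor C f) (rTensor C β (β m))) := by
        rw [hf, ← rTensor_comp_apply, hγf, rTensor_comp_apply]
    _ = rTensor (C ⊗[R] C) f (TensorProduct.assoc R M C C (rTensor C β (β m))) := by
        rw [rTensor_tensor]
        simp
    _ = lTensor N Coalgebra.comul (rTensor C f (β m)) := by
        rw [hβ, ← comp_apply, rTensor_comp_lTensor, ← lTensor_comp_rTensor, comp_apply]
    _ = lTensor N Coalgebra.comul (γ (f m)) := by rw [hf]

variable {β : M →ₗ[R] M ⊗[R] C} (hβ : IsCoassociative β)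
include hβ

theorem apply_counitEnd (m : M) : β (counitEnd β m) = β m := by
  rw [counitEnd, comp_apply, ← contractCounit_rTensor, hβ.rTensor_apply_eq_assoc_symm,
    contractCounit_assoc_symm_lTensor_comul]

theorem rTensor_counitEnd (m : M) : rTensor C (counitEnd β) (β m) = β m := by
  rw [counitEnd, rTensor_comp_apply, hβ.rTensor_apply_eq_assoc_symm,
    rTensor_contractCounit_assoc_symm_lTensor_comul]

theorem counitEnd_counitEnd (m : M) : counitEnd β (counitEnd β m) = counitEnd β m :=
  congr_arg (contractCounit R C M) (hβ.apply_counitEnd m)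

theorem rTensor_subtype_rangeCoaction (z : range (counitEnd β)) :
    rTensor C (range (counitEnd β)).subtype (rangeCoaction β z) = β z := by
  rw [rangeCoaction, comp_apply, ← rTensor_comp_apply, subtype_comp_codRestrict]
  exact hβ.rTensor_counitEnd z

theorem rangeCoaction_rangeRestrict (m : M) :
    rangeCoaction β ((counitEnd β).rangeRestrict m) =
      rTensor C (counitEnd β).rangeRestrict (β m) :=
  congr_arg (rTensor C (counitEnd β).rangeRestrict) (hβ.apply_counitEnd m)

theorem counitEnd_rangeCoaction (z : range (counitEnd β)) :
    counitEnd (rangeCoaction β) z = z := by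
  obtain ⟨m, rfl⟩ := (counitEnd β).surjective_rangeRestrict z
  rw [counitEnd_apply_of_intertwines hβ.rangeCoaction_rangeRestrict]
  exact Subtype.ext (hβ.counitEnd_counitEnd m)

theorem rangeCoaction : IsCoassociative (rangeCoaction β) :=
  hβ.of_surjective (counitEnd β).surjective_rangeRestrict hβ.rangeCoaction_rangeRestrict

end IsCoassociative

end Coaction

section TensorCoaction

variable {R A B V V' W W' : Type*} [CommSemiring R]
  [NonUnitalNonAssocSemiring A] [Module R A] [SMulCommClass R A A] [IsScalarTower R A A]
  [NonUnitalNonAssocSemiring B] [Module R B] [SMulCommClass R B B] [IsScalarTower R B B]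
  [AddCommMonoid V] [Module R V] [AddCommMonoid V'] [Module R V']
  [AddCommMonoid W] [Module R W] [AddCommMonoid W'] [Module R W']

variable (R A V W) in
/-- The map `(v ⊗ a) ⊗ (w ⊗ b) ↦ (v ⊗ w) ⊗ ab` multiplying the coefficients in `A`. -/
noncomputable def mulCoeff : (V ⊗[R] A) ⊗[R] (W ⊗[R] A) →ₗ[R] (V ⊗[R] W) ⊗[R] A :=
  lTensor (V ⊗[R] W) (mul' R A) ∘ₗ (tensorTensorTensorComm R V A W A).toLinearMap

@[simp]
theorem mulCoeff_tmul (v : V) (a : A) (w : W) (b : A) :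
    mulCoeff R A V W ((v ⊗ₜ a) ⊗ₜ (w ⊗ₜ b)) = (v ⊗ₜ w) ⊗ₜ (a * b) := by
  simp [mulCoeff]

theorem rTensor_map_mulCoeff (f : V →ₗ[R] V') (g : W →ₗ[R] W') (t : (V ⊗[R] A) ⊗[R] (W ⊗[R] A)) :
    rTensor A (map f g) (mulCoeff R A V W t) =
      mulCoeff R A V' W' (map (rTensor A f) (rTensor A g) t) := by
  suffices rTensor A (map f g) ∘ₗ mulCoeff R A V W =
      mulCoeff R A V' W' ∘ₗ map (rTensor A f) (rTensor A g) from LinearMap.congr_fun this t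
  ext v a w b
  simp

theorem lTensor_mulCoeff (φ : A →ₗ[R] B) (hφ : ∀ a b, φ (a * b) = φ a * φ b)
    (t : (V ⊗[R] A) ⊗[R] (W ⊗[R] A)) :
    lTensor (V ⊗[R] W) φ (mulCoeff R A V W t) =
      mulCoeff R B V W (map (lTensor V φ) (lTensor W φ) t) := by
  suffices lTensor (V ⊗[R] W) φ ∘ₗ mulCoeff R A V W =
      mulCoeff R B V W ∘ₗ map (lTensor V φ) (lTensor W φ) from LinearMap.congr_fun this t
  ext v a w b
  simp [hφ]

theorem assoc_rTensor_mulCoeff_mulCoeff (t : ((V ⊗[R] A) ⊗[R] B) ⊗[R] ((W ⊗[R] A) ⊗[R] B)) :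
    TensorProduct.assoc R (V ⊗[R] W) A B
        (rTensor B (mulCoeff R A V W) (mulCoeff R B (V ⊗[R] A) (W ⊗[R] A) t)) =
      mulCoeff R (A ⊗[R] B) V W
        (congr (TensorProduct.assoc R V A B) (TensorProduct.assoc R W A B) t) := by
  suffices (TensorProduct.assoc R (V ⊗[R] W) A B).toLinearMap ∘ₗ rTensor B (mulCoeff R A V W) ∘ₗ
        mulCoeff R B (V ⊗[R] A) (W ⊗[R] A) =
      mulCoeff R (A ⊗[R] B) V W ∘ₗ
        (congr (TensorProduct.assoc R V A B) (TensorProduct.assoc R W A B)).toLinearMap from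
    LinearMap.congr_fun this t
  ext v a b w a' b'
  simp

/-- The diagonal coaction `v ⊗ w ↦ Σ (v_V ⊗ w_W) ⊗ v_A w_A` on `V ⊗ W`. -/
noncomputable def tensorCoaction (βV : V →ₗ[R] V ⊗[R] A) (βW : W →ₗ[R] W ⊗[R] A) :
    V ⊗[R] W →ₗ[R] (V ⊗[R] W) ⊗[R] A :=
  mulCoeff R A V W ∘ₗ map βV βW

theorem IsCoassociative.tensorCoaction [Coalgebra R A]
    (hmul : ∀ a b : A, Coalgebra.comul (R := R) (a * b) = Coalgebra.comul a * Coalgebra.comul b)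
    {βV : V →ₗ[R] V ⊗[R] A} {βW : W →ₗ[R] W ⊗[R] A}
    (hV : IsCoassociative βV) (hW : IsCoassociative βW) :
    IsCoassociative (tensorCoaction βV βW) := by
  intro z
  induction z with
  | zero => simp only [map_zero]
  | add x y hx hy => simp only [map_add, hx, hy]
  | tmul v w =>
    calc TensorProduct.assoc R (V ⊗[R] W) A A
          (rTensor A (mulCoeff R A V W ∘ₗ map βV βW) (mulCoeff R A V W (βV v ⊗ₜ βW w)))
        = mulCoeff R (A ⊗[R] A) V W
            (TensorProduct.assoc R V A A (rTensor A βV (βV v)) ⊗ₜ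
              TensorProduct.assoc R W A A (rTensor A βW (βW w))) := by
          rw [rTensor_comp_apply, rTensor_map_mulCoeff, assoc_rTensor_mulCoeff_mulCoeff,
            map_tmul, congr_tmul]
      _ = mulCoeff R (A ⊗[R] A) V W
            (lTensor V Coalgebra.comul (βV v) ⊗ₜ lTensor W Coalgebra.comul (βW w)) := by
          rw [hV, hW]
      _ = lTensor (V ⊗[R] W) Coalgebra.comul (mulCoeff R A V W (βV v ⊗ₜ βW w)) := by
          rw [lTensor_mulCoeff _ hmul, map_tmul]

theorem truncated_tensor_comodule_general [Coalgebra R A]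
    (hmul : ∀ a b : A, Coalgebra.comul (R := R) (a * b) = Coalgebra.comul a * Coalgebra.comul b)
    (βV : V →ₗ[R] V ⊗[R] A) (βW : W →ₗ[R] W ⊗[R] A)
    (hV : IsCoassociative βV) (hW : IsCoassociative βW) :
    counitEnd (tensorCoaction βV βW) ∘ₗ counitEnd (tensorCoaction βV βW) =
        counitEnd (tensorCoaction βV βW) ∧
      (∀ z ∈ range (counitEnd (tensorCoaction βV βW)), tensorCoaction βV βW z ∈
        range (rTensor A (range (counitEnd (tensorCoaction βV βW))).subtype)) ∧
      ∃ β' : range (counitEnd (tensorCoaction βV βW)) →ₗ[R]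
          range (counitEnd (tensorCoaction βV βW)) ⊗[R] A,
        (∀ z, rTensor A (range (counitEnd (tensorCoaction βV βW))).subtype (β' z) =
          tensorCoaction βV βW z) ∧
        (∀ z, counitEnd β' z = z) ∧ IsCoassociative β' := by
  have hβ : IsCoassociative (tensorCoaction βV βW) := .tensorCoaction hmul hV hW
  have restricts := hβ.rTensor_subtype_rangeCoaction
  exact ⟨LinearMap.ext hβ.counitEnd_counitEnd, fun z hz ↦ ⟨_, restricts ⟨z, hz⟩⟩,
    rangeCoaction _, restricts, hβ.counitEnd_rangeCoaction, hβ.rangeCoaction⟩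

end TensorCoaction

theorem Ptrunc_eq_counitEnd {k H V W : Type*} [Field k] [Ring H] [Algebra k H]
    [WeakBialgebra k H] [AddCommGroup V] [Module k V] [AddCommGroup W] [Module k W]
    (βV : V →ₗ[k] V ⊗[k] H) (βW : W →ₗ[k] W ⊗[k] H) :
    Ptrunc k βV βW = counitEnd (tensorCoaction βV βW) := by
  simp only [Ptrunc, counitEnd, contractCounit, tensorCoaction, mulCoeff, lTensor_comp, comp_assoc]

/-- For right comodules `V`, `W` of a weak bialgebra over a field,
the map `P_{V,W}(v⊗w) = Σ (v_V⊗w_W)·ε(v_H·w_H)` is idempotent, the coaction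
`v⊗w ↦ Σ (v_V⊗w_W)⊗(v_H·w_H)` maps the image `V⊗̂W` of `P_{V,W}` into `(V⊗̂W)⊗H`,
and its restriction makes `V⊗̂W` a right `H`-comodule. -/
theorem truncated_tensor_comodule [WeakBialgebra k H]
    {V W : Type*} [AddCommGroup V] [Module k V] [AddCommGroup W] [Module k W]
    (βV : V →ₗ[k] V ⊗[k] H) (βW : W →ₗ[k] W ⊗[k] H)
    (hV1 : ∀ v : V,
      TensorProduct.rid k V
        ((LinearMap.lTensor V (Coalgebra.counit (R := k) (A := H))) (βV v)) = v)
    (hV2 : ∀ v : V,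
      (TensorProduct.assoc k V H H) ((LinearMap.rTensor H βV) (βV v)) =
        (LinearMap.lTensor V (Coalgebra.comul (R := k) (A := H))) (βV v))
    (hW1 : ∀ w : W,
      TensorProduct.rid k W
        ((LinearMap.lTensor W (Coalgebra.counit (R := k) (A := H))) (βW w)) = w)
    (hW2 : ∀ w : W,
      (TensorProduct.assoc k W H H) ((LinearMap.rTensor H βW) (βW w)) =
        (LinearMap.lTensor W (Coalgebra.comul (R := k) (A := H))) (βW w)) :
    (Ptrunc k βV βW ∘ₗ Ptrunc k βV βW = Ptrunc k βV βW) ∧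
    (∀ z ∈ LinearMap.range (Ptrunc k βV βW),
      coactTrunc k βV βW z ∈
        LinearMap.range (LinearMap.rTensor H (LinearMap.range (Ptrunc k βV βW)).subtype)) ∧
    ∃ β' : ↥(LinearMap.range (Ptrunc k βV βW)) →ₗ[k]
        ↥(LinearMap.range (Ptrunc k βV βW)) ⊗[k] H,
      (∀ z : ↥(LinearMap.range (Ptrunc k βV βW)),
        (LinearMap.rTensor H (LinearMap.range (Ptrunc k βV βW)).subtype) (β' z) =
          coactTrunc k βV βW (z : V ⊗[k] W)) ∧
      (∀ z : ↥(LinearMap.range (Ptrunc k βV βW)),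
        TensorProduct.rid k ↥(LinearMap.range (Ptrunc k βV βW))
          ((LinearMap.lTensor ↥(LinearMap.range (Ptrunc k βV βW))
            (Coalgebra.counit (R := k) (A := H))) (β' z)) = z) ∧
      (∀ z : ↥(LinearMap.range (Ptrunc k βV βW)),
        (TensorProduct.assoc k ↥(LinearMap.range (Ptrunc k βV βW)) H H)
            ((LinearMap.rTensor H β') (β' z)) =
          (LinearMap.lTensor ↥(LinearMap.range (Ptrunc k βV βW))
            (Coalgebra.comul (R := k) (A := H))) (β' z)) := by
  rw [Ptrunc_eq_counitEnd]
  exact truncated_tensor_comodule_general WeakBialgebra.comul_mul βV βW hV2 hW2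
end

section
/- Let H be a weak bialgebra over a field k and (V, β_V) a right H-comodule. Then the linear maps λ_V : H_s⊗̂V → V, h⊗v ↦ Σ v_V·ε(h·v_H), and ρ_V : V⊗̂H_s → V, v⊗h ↦ Σ v_V·ε(v_H·h), are isomorphisms of right H-comodules, with inverses given by λ_V⁻¹(v) = Σ (1⁽¹⁾ ⊗ v_V)·ε(1⁽²⁾·v_H) and ρ_V⁻¹(v) = Σ v_V ⊗ ε_s(v_H). -/
/-!
Applying a functional to the last leg of the two forms of `Δ²(1)` in (WBA3) shows that
`Δ(h) = Δ(1)(1 ⊗ h) = (1 ⊗ h)Δ(1)` for `h ∈ H_s`. Multiplying by `Δ(x)` and applying the counit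
gives `Σ x⁽¹⁾ε(x⁽²⁾h) = xh` and `Σ x⁽¹⁾ε(hx⁽²⁾) = hx`, so that, by coassociativity,
`β_V(ρ_V(v ⊗ h)) = Σ v_V ⊗ v_H h` and `β_V(λ_V(h ⊗ v)) = Σ v_V ⊗ h v_H`.

The multiplicativity of `Δ` identifies these with the images under `ρ_V ⊗ id` and `λ_V ⊗ id` of the
coactions on `V ⊗ H_s` and `H_s ⊗ V`, so `ρ_V` and `λ_V` are comodule maps. Moving `h` across the
product in `H` they also say that `ρ_V⁻¹ ∘ ρ_V` and `λ_V⁻¹ ∘ λ_V` are the truncation idempotents.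
Each of these idempotents `P` is the coaction followed by the counit, and `V` is counital, so
comodule maps into `V` satisfy `ρ_V ∘ P = ρ_V` and `λ_V ∘ P = λ_V`. Together with surjectivity, from
`ρ_V(v ⊗ 1) = v = λ_V(1 ⊗ v)`, this makes the maps mutually inverse on the image of `P`.
-/

open scoped TensorProduct
open TensorProduct LinearMap

variable (k H : Type*) [Field k] [Ring H] [Algebra k H]

/-! ### Slice maps and products of last legs -/

section Slice

variable {R M M' N A : Type*} [CommSemiring R] [AddCommMonoid M] [Module R M]
  [AddCommMonoid M'] [Module R M'] [AddCommMonoid N] [Module R N]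

/-- The slice map `id ⊗ f : M ⊗ N → M`, which evaluates the functional `f` on the last leg. -/
noncomputable def slice (f : N →ₗ[R] R) : M ⊗[R] N →ₗ[R] M :=
  (TensorProduct.rid R M).toLinearMap ∘ₗ LinearMap.lTensor M f

@[simp]
lemma slice_tmul (f : N →ₗ[R] R) (m : M) (n : N) : slice f (m ⊗ₜ[R] n) = f n • m := by
  simp [slice]

lemma slice_rTensor (f : N →ₗ[R] R) (g : M →ₗ[R] M') (t : M ⊗[R] N) :
    slice f (g.rTensor N t) = g (slice f t) := by
  have : slice f ∘ₗ g.rTensor N = g ∘ₗ slice f := TensorProduct.ext' fun m n => by simp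
  exact LinearMap.congr_fun this t

lemma slice_assoc_symm (f : N →ₗ[R] R) (t : M ⊗[R] (M' ⊗[R] N)) :
    slice f ((TensorProduct.assoc R M M' N).symm t) = (slice f).lTensor M t := by
  have : slice f ∘ₗ (TensorProduct.assoc R M M' N).symm.toLinearMap = (slice f).lTensor M :=
    TensorProduct.ext_threefold' fun m m' n => by simp
  exact LinearMap.congr_fun this t

variable [Semiring A] [Algebra R A] {B : Type*} [Semiring B] [Algebra R B]

lemma slice_tmul_one_mul (f : B →ₗ[R] R) (a : A) (t : A ⊗[R] B) :
    slice f ((a ⊗ₜ[R] 1) * t) = a * slice f t := by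
  induction t with
  | zero => simp
  | tmul x y => simp
  | add s t hs ht => simp only [mul_add, map_add, hs, ht]

lemma slice_mul_tmul_one (f : B →ₗ[R] R) (a : A) (t : A ⊗[R] B) :
    slice f (t * (a ⊗ₜ[R] 1)) = slice f t * a := by
  induction t with
  | zero => simp
  | tmul x y => simp
  | add s t hs ht => simp only [add_mul, map_add, hs, ht]

lemma slice_one_tmul_mul (f : B →ₗ[R] R) (b : B) (t : A ⊗[R] B) :
    slice f ((1 ⊗ₜ[R] b) * t) = slice (f ∘ₗ LinearMap.mulLeft R b) t := by
  induction t with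
  | zero => simp
  | tmul x y => simp
  | add s t hs ht => simp only [mul_add, map_add, hs, ht]

lemma slice_mul_one_tmul (f : B →ₗ[R] R) (b : B) (t : A ⊗[R] B) :
    slice f (t * (1 ⊗ₜ[R] b)) = slice (f ∘ₗ LinearMap.mulRight R b) t := by
  induction t with
  | zero => simp
  | tmul x y => simp
  | add s t hs ht => simp only [add_mul, map_add, hs, ht]

end Slice

section MulLast

variable {R A B M M' N N' : Type*} [CommSemiring R] [Semiring A] [Algebra R A]
  [Semiring B] [Algebra R B] [AddCommMonoid M] [Module R M] [AddCommMonoid M'] [Module R M']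
  [AddCommMonoid N] [Module R N] [AddCommMonoid N'] [Module R N']

variable (R A M N) in
/-- The map `(m ⊗ a) ⊗ (n ⊗ b) ↦ (m ⊗ n) ⊗ ab`, by which the coaction on a tensor product of
comodules is formed from the coactions on its factors. -/
noncomputable def mulLast : (M ⊗[R] A) ⊗[R] (N ⊗[R] A) →ₗ[R] (M ⊗[R] N) ⊗[R] A :=
  LinearMap.lTensor (M ⊗[R] N) (LinearMap.mul' R A) ∘ₗ
    (TensorProduct.tensorTensorTensorComm R M A N A).toLinearMap

@[simp]
lemma mulLast_tmul (m : M) (a : A) (n : N) (b : A) :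
    mulLast R A M N ((m ⊗ₜ[R] a) ⊗ₜ[R] (n ⊗ₜ[R] b)) = (m ⊗ₜ[R] n) ⊗ₜ[R] (a * b) := by
  simp [mulLast]

lemma rTensor_map_comp_mulLast (f : M →ₗ[R] M') (g : N →ₗ[R] N') :
    LinearMap.rTensor A (TensorProduct.map f g) ∘ₗ mulLast R A M N =
      mulLast R A M' N' ∘ₗ TensorProduct.map (f.rTensor A) (g.rTensor A) :=
  TensorProduct.ext_fourfold' fun m a n b => by simp

lemma mulLast_tmul_one_tmul_mul (a : A) (t : M ⊗[R] A) (s : B ⊗[R] A) :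
    mulLast R A M B (t ⊗ₜ[R] ((1 ⊗ₜ[R] a) * s)) =
      mulLast R A M B ((LinearMap.mulRight R a).lTensor M t ⊗ₜ[R] s) := by
  have : mulLast R A M B ∘ₗ (LinearMap.mulLeft R ((1 : B) ⊗ₜ[R] a)).lTensor (M ⊗[R] A) =
      mulLast R A M B ∘ₗ ((LinearMap.mulRight R a).lTensor M).rTensor (B ⊗[R] A) :=
    TensorProduct.ext_fourfold' fun m x b y => by simp [mul_assoc]
  exact LinearMap.congr_fun this (t ⊗ₜ[R] s)

lemma mulLast_mul_one_tmul_tmul (a : A) (s : B ⊗[R] A) (t : M ⊗[R] A) :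
    mulLast R A B M ((s * (1 ⊗ₜ[R] a)) ⊗ₜ[R] t) =
      mulLast R A B M (s ⊗ₜ[R] (LinearMap.mulLeft R a).lTensor M t) := by
  have : mulLast R A B M ∘ₗ (LinearMap.mulRight R ((1 : B) ⊗ₜ[R] a)).rTensor (M ⊗[R] A) =
      mulLast R A B M ∘ₗ ((LinearMap.mulLeft R a).lTensor M).lTensor (B ⊗[R] A) :=
    TensorProduct.ext_fourfold' fun b y m x => by simp [mul_assoc]
  exact LinearMap.congr_fun this (s ⊗ₜ[R] t)

lemma slice_mulLast_tmul (f : A →ₗ[R] R) (m : M) (a : A) (s : B ⊗[R] A) :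
    slice f (mulLast R A M B ((m ⊗ₜ[R] a) ⊗ₜ[R] s)) = m ⊗ₜ[R] slice f ((1 ⊗ₜ[R] a) * s) := by
  induction s with
  | zero => simp
  | tmul b c => simp
  | add s t hs ht => simp only [mul_add, TensorProduct.tmul_add, map_add, hs, ht]

end MulLast

/-! ### Comodules over a coalgebra -/

section RightCoaction

variable {R C V : Type*} [CommSemiring R] [AddCommMonoid C] [Module R C] [Coalgebra R C]
  [AddCommMonoid V] [Module R V]

lemma slice_counit_comul (c : C) :
    slice (Coalgebra.counit (R := R)) (Coalgebra.comul (R := R) c) = c := by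
  simp [slice]

/-- The axioms of a right `C`-comodule `V`, as a property of its coaction. -/
structure IsRightCoaction (β : V →ₗ[R] V ⊗[R] C) : Prop where
  slice_counit : ∀ v, slice Coalgebra.counit (β v) = v
  coassoc : ∀ v, TensorProduct.assoc R V C C (β.rTensor C (β v)) = Coalgebra.comul.lTensor V (β v)

namespace IsRightCoaction

variable {β : V →ₗ[R] V ⊗[R] C}

lemma coaction_slice (hβ : IsRightCoaction β) (f : C →ₗ[R] R) (v : V) :
    β (slice f (β v)) = (slice f ∘ₗ Coalgebra.comul).lTensor V (β v) := by
  rw [← slice_rTensor, ← (TensorProduct.assoc R V C C).symm_apply_apply (β.rTensor C (β v)),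
    hβ.coassoc, slice_assoc_symm, ← LinearMap.lTensor_comp_apply]

lemma apply_slice_counit (hβ : IsRightCoaction β) {X : Type*} [AddCommMonoid X] [Module R X]
    {χ : X →ₗ[R] X ⊗[R] C} {f : X →ₗ[R] V} (hf : β ∘ₗ f = f.rTensor C ∘ₗ χ) (x : X) :
    f (slice Coalgebra.counit (χ x)) = f x := by
  have hfx : β (f x) = f.rTensor C (χ x) := LinearMap.congr_fun hf x
  rw [← slice_rTensor, ← hfx, hβ.slice_counit]

end IsRightCoaction

end RightCoaction

/-! ### Truncated tensor products -/

section CoactTrunc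

variable {k H} {V V' W W' : Type*} [AddCommGroup V] [Module k V] [AddCommGroup V'] [Module k V']
  [AddCommGroup W] [Module k W] [AddCommGroup W'] [Module k W']

lemma coactTrunc_eq (βV : V →ₗ[k] V ⊗[k] H) (βW : W →ₗ[k] W ⊗[k] H) :
    coactTrunc k βV βW = mulLast k H V W ∘ₗ TensorProduct.map βV βW := rfl

lemma coactTrunc_tmul (βV : V →ₗ[k] V ⊗[k] H) (βW : W →ₗ[k] W ⊗[k] H) (v : V) (w : W) :
    coactTrunc k βV βW (v ⊗ₜ[k] w) = mulLast k H V W (βV v ⊗ₜ[k] βW w) := rfl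

lemma rTensor_map_comp_coactTrunc {βV : V →ₗ[k] V ⊗[k] H} {βW : W →ₗ[k] W ⊗[k] H}
    {βV' : V' →ₗ[k] V' ⊗[k] H} {βW' : W' →ₗ[k] W' ⊗[k] H} {f : V →ₗ[k] V'} {g : W →ₗ[k] W'}
    (hf : f.rTensor H ∘ₗ βV = βV' ∘ₗ f) (hg : g.rTensor H ∘ₗ βW = βW' ∘ₗ g) :
    (TensorProduct.map f g).rTensor H ∘ₗ coactTrunc k βV βW =
      coactTrunc k βV' βW' ∘ₗ TensorProduct.map f g := by
  rw [coactTrunc_eq, ← LinearMap.comp_assoc, rTensor_map_comp_mulLast, LinearMap.comp_assoc,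
    ← TensorProduct.map_comp, hf, hg, TensorProduct.map_comp, ← LinearMap.comp_assoc, coactTrunc_eq]

lemma rTensor_lTensor_comp_coactTrunc (βV : V →ₗ[k] V ⊗[k] H) {βW : W →ₗ[k] W ⊗[k] H}
    {βW' : W' →ₗ[k] W' ⊗[k] H} {g : W →ₗ[k] W'} (hg : g.rTensor H ∘ₗ βW = βW' ∘ₗ g) :
    (g.lTensor V).rTensor H ∘ₗ coactTrunc k βV βW = coactTrunc k βV βW' ∘ₗ g.lTensor V :=
  rTensor_map_comp_coactTrunc
    (by rw [LinearMap.rTensor_id, LinearMap.id_comp, LinearMap.comp_id]) hg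

lemma rTensor_rTensor_comp_coactTrunc {βV : V →ₗ[k] V ⊗[k] H} {βV' : V' →ₗ[k] V' ⊗[k] H}
    (βW : W →ₗ[k] W ⊗[k] H) {f : V →ₗ[k] V'} (hf : f.rTensor H ∘ₗ βV = βV' ∘ₗ f) :
    (f.rTensor W).rTensor H ∘ₗ coactTrunc k βV βW = coactTrunc k βV' βW ∘ₗ f.rTensor W :=
  rTensor_map_comp_coactTrunc hf
    (by rw [LinearMap.rTensor_id, LinearMap.id_comp, LinearMap.comp_id])

variable [WeakBialgebra k H]

lemma Ptrunc_apply (βV : V →ₗ[k] V ⊗[k] H) (βW : W →ₗ[k] W ⊗[k] H) (z : V ⊗[k] W) :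
    Ptrunc k βV βW z = slice Coalgebra.counit (coactTrunc k βV βW z) := by
  simp [Ptrunc, slice, coactTrunc, LinearMap.lTensor_comp_apply]

lemma Ptrunc_tmul (βV : V →ₗ[k] V ⊗[k] H) (βW : W →ₗ[k] W ⊗[k] H) (v : V) (w : W) :
    Ptrunc k βV βW (v ⊗ₜ[k] w) =
      slice Coalgebra.counit (mulLast k H V W (βV v ⊗ₜ[k] βW w)) := by
  rw [Ptrunc_apply, coactTrunc_tmul]

lemma map_Ptrunc {βV : V →ₗ[k] V ⊗[k] H} {βW : W →ₗ[k] W ⊗[k] H}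
    {βV' : V' →ₗ[k] V' ⊗[k] H} {βW' : W' →ₗ[k] W' ⊗[k] H} {i : V ⊗[k] W →ₗ[k] V' ⊗[k] W'}
    (hi : i.rTensor H ∘ₗ coactTrunc k βV βW = coactTrunc k βV' βW' ∘ₗ i) (z : V ⊗[k] W) :
    i (Ptrunc k βV βW z) = Ptrunc k βV' βW' (i z) := by
  have hiz : i.rTensor H (coactTrunc k βV βW z) = coactTrunc k βV' βW' (i z) :=
    LinearMap.congr_fun hi z
  rw [Ptrunc_apply, Ptrunc_apply, ← slice_rTensor, hiz]

lemma IsRightCoaction.apply_Ptrunc {U : Type*} [AddCommGroup U] [Module k U]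
    {βU : U →ₗ[k] U ⊗[k] H} (hβU : IsRightCoaction βU) {βV : V →ₗ[k] V ⊗[k] H}
    {βW : W →ₗ[k] W ⊗[k] H} {f : V ⊗[k] W →ₗ[k] U}
    (hf : βU ∘ₗ f = f.rTensor H ∘ₗ coactTrunc k βV βW) (z : V ⊗[k] W) :
    f (Ptrunc k βV βW z) = f z := by
  rw [Ptrunc_apply, hβU.apply_slice_counit hf]

end CoactTrunc

/-! ### The source base algebra -/

namespace WeakBialgebra

variable {k H} [WeakBialgebra k H]

local notation "Δ" => Coalgebra.comul (R := k) (A := H)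
local notation "ε" => Coalgebra.counit (R := k) (A := H)

lemma comul_slice_comul_one (f : H →ₗ[k] k) :
    Δ (slice f (Δ 1)) = Δ 1 * (1 ⊗ₜ[k] slice f (Δ 1)) := by
  rw [← slice_rTensor, LinearMap.rTensor, comul_comul_one, slice_tmul_one_mul, slice_assoc_symm,
    LinearMap.lTensor_tmul]

lemma comul_slice_comul_one' (f : H →ₗ[k] k) :
    Δ (slice f (Δ 1)) = (1 ⊗ₜ[k] slice f (Δ 1)) * Δ 1 := by
  rw [← slice_rTensor, LinearMap.rTensor, comul_comul_one', slice_mul_tmul_one, slice_assoc_symm,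
    LinearMap.lTensor_tmul]

lemma exists_slice_comul_one_eq {h : H} (hh : h ∈ Hs k H) : ∃ f : H →ₗ[k] k, slice f (Δ 1) = h := by
  obtain ⟨x, rfl⟩ := hh
  exact ⟨ε ∘ₗ LinearMap.mulLeft k x, (slice_one_tmul_mul ε x (Δ 1)).symm⟩

lemma comul_eq_comul_one_mul {h : H} (hh : h ∈ Hs k H) : Δ h = Δ 1 * (1 ⊗ₜ[k] h) := by
  obtain ⟨f, rfl⟩ := exists_slice_comul_one_eq hh
  exact comul_slice_comul_one f

lemma comul_eq_mul_comul_one {h : H} (hh : h ∈ Hs k H) : Δ h = (1 ⊗ₜ[k] h) * Δ 1 := by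
  obtain ⟨f, rfl⟩ := exists_slice_comul_one_eq hh
  exact comul_slice_comul_one' f

lemma one_mem_Hs : (1 : H) ∈ Hs k H := by
  refine ⟨1, ?_⟩
  change slice ε ((1 ⊗ₜ[k] 1) * Δ 1) = 1
  rw [← Algebra.TensorProduct.one_def, one_mul, slice_counit_comul]

lemma slice_mulRight_comp_comul {h : H} (hh : h ∈ Hs k H) :
    slice (ε ∘ₗ LinearMap.mulRight k h) ∘ₗ Δ = LinearMap.mulRight k h := by
  ext x
  calc slice (ε ∘ₗ LinearMap.mulRight k h) (Δ x)
      = slice ε (Δ x * (1 ⊗ₜ[k] h)) := (slice_mul_one_tmul ..).symm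
    _ = slice ε (Δ (x * h)) := by
      rw [comul_mul, comul_eq_comul_one_mul hh, ← mul_assoc, ← comul_mul, mul_one]
    _ = x * h := slice_counit_comul _

lemma slice_mulLeft_comp_comul {h : H} (hh : h ∈ Hs k H) :
    slice (ε ∘ₗ LinearMap.mulLeft k h) ∘ₗ Δ = LinearMap.mulLeft k h := by
  ext x
  calc slice (ε ∘ₗ LinearMap.mulLeft k h) (Δ x)
      = slice ε ((1 ⊗ₜ[k] h) * Δ x) := (slice_one_tmul_mul ..).symm
    _ = slice ε (Δ (h * x)) := by
      rw [comul_mul, comul_eq_mul_comul_one hh, mul_assoc, ← comul_mul, one_mul]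
    _ = h * x := slice_counit_comul _

/-! ### Unit constraints -/

section UnitConstraints

variable {V : Type*} [AddCommGroup V] [Module k V] {βV : V →ₗ[k] V ⊗[k] H}

lemma rhoAmb_tmul (βV : V →ₗ[k] V ⊗[k] H) (v : V) (h : H) :
    rhoAmb k βV (v ⊗ₜ[k] h) = slice (ε ∘ₗ LinearMap.mulRight k h) (βV v) := by
  simp only [rhoAmb, LinearMap.comp_apply, LinearMap.rTensor_tmul, LinearEquiv.coe_coe]
  induction βV v with
  | zero => simp
  | tmul w x => simp
  | add s t hs ht => simp only [map_add, TensorProduct.add_tmul, hs, ht]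

lemma lamAmb_tmul (βV : V →ₗ[k] V ⊗[k] H) (h : H) (v : V) :
    lamAmb k βV (h ⊗ₜ[k] v) = slice (ε ∘ₗ LinearMap.mulLeft k h) (βV v) := by
  simp only [lamAmb, LinearMap.comp_apply, LinearMap.lTensor_tmul, LinearEquiv.coe_coe]
  induction βV v with
  | zero => simp
  | tmul w x => simp
  | add s t hs ht => simp only [map_add, TensorProduct.tmul_add, hs, ht]

lemma rhoAmb_tmul_one (hβV : IsRightCoaction βV) (v : V) : rhoAmb k βV (v ⊗ₜ[k] (1 : H)) = v := by
  rw [rhoAmb_tmul, LinearMap.mulRight_one, LinearMap.comp_id, hβV.slice_counit]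

lemma lamAmb_one_tmul (hβV : IsRightCoaction βV) (v : V) : lamAmb k βV ((1 : H) ⊗ₜ[k] v) = v := by
  rw [lamAmb_tmul, LinearMap.mulLeft_one, LinearMap.comp_id, hβV.slice_counit]

lemma coaction_rhoAmb_tmul (hβV : IsRightCoaction βV) (v : V) {h : H} (hh : h ∈ Hs k H) :
    βV (rhoAmb k βV (v ⊗ₜ[k] h)) = (LinearMap.mulRight k h).lTensor V (βV v) := by
  rw [rhoAmb_tmul, hβV.coaction_slice, slice_mulRight_comp_comul hh]

lemma coaction_lamAmb_tmul (hβV : IsRightCoaction βV) {h : H} (hh : h ∈ Hs k H) (v : V) :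
    βV (lamAmb k βV (h ⊗ₜ[k] v)) = (LinearMap.mulLeft k h).lTensor V (βV v) := by
  rw [lamAmb_tmul, hβV.coaction_slice, slice_mulLeft_comp_comul hh]

-- Isolates `βV ⊗ id` in front, where coassociativity can be applied to `(βV ⊗ id) (βV v)`.
lemma rTensor_rhoAmb_comp_mulLast (βV : V →ₗ[k] V ⊗[k] H) :
    (rhoAmb k βV).rTensor H ∘ₗ mulLast k H V H =
      ((TensorProduct.lid k H).toLinearMap ∘ₗ LinearMap.rTensor H ε ∘ₗ
          LinearMap.mul' k (H ⊗[k] H)).lTensor V ∘ₗ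
        (TensorProduct.assoc k V (H ⊗[k] H) (H ⊗[k] H)).toLinearMap ∘ₗ
          ((TensorProduct.assoc k V H H).toLinearMap ∘ₗ βV.rTensor H).rTensor (H ⊗[k] H) := by
  refine TensorProduct.ext_fourfold' fun v x h y => ?_
  simp only [LinearMap.comp_apply, mulLast_tmul, LinearMap.rTensor_tmul, rhoAmb_tmul,
    LinearEquiv.coe_coe]
  induction βV v with
  | zero => simp
  | tmul w z => simp [TensorProduct.smul_tmul]
  | add s t hs ht => simp only [map_add, TensorProduct.add_tmul, hs, ht]

lemma rTensor_rhoAmb_coactTrunc_tmul (hβV : IsRightCoaction βV) (v : V) (h : H) :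
    (rhoAmb k βV).rTensor H (coactTrunc k βV Δ (v ⊗ₜ[k] h)) =
      (LinearMap.mulRight k h).lTensor V (βV v) := by
  refine (LinearMap.congr_fun (rTensor_rhoAmb_comp_mulLast βV) (βV v ⊗ₜ[k] Δ h)).trans ?_
  simp only [LinearMap.comp_apply, LinearMap.rTensor_tmul, LinearEquiv.coe_coe, hβV.coassoc]
  induction βV v with
  | zero => simp
  | tmul w x => simp [← comul_mul]
  | add s t hs ht => simp only [map_add, TensorProduct.add_tmul, hs, ht]

lemma rhoInvAmb_apply (βV : V →ₗ[k] V ⊗[k] H) (v : V) :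
    rhoInvAmb k βV v = slice ε (mulLast k H V H (βV v ⊗ₜ[k] Δ 1)) := by
  simp only [rhoInvAmb, LinearMap.comp_apply]
  induction βV v with
  | zero => simp
  | tmul w x => exact (slice_mulLast_tmul ε w x (Δ 1)).symm
  | add s t hs ht => simp only [map_add, TensorProduct.add_tmul, hs, ht]

lemma rTensor_lamAmb_comp_mulLast (βV : V →ₗ[k] V ⊗[k] H) :
    (lamAmb k βV).rTensor H ∘ₗ mulLast k H H V =
      ((TensorProduct.lid k H).toLinearMap ∘ₗ LinearMap.rTensor H ε ∘ₗ
          LinearMap.mul' k (H ⊗[k] H)).lTensor V ∘ₗ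
        (TensorProduct.leftComm k (H ⊗[k] H) V (H ⊗[k] H)).toLinearMap ∘ₗ
          ((TensorProduct.assoc k V H H).toLinearMap ∘ₗ βV.rTensor H).lTensor (H ⊗[k] H) := by
  refine TensorProduct.ext_fourfold' fun h y v x => ?_
  simp only [LinearMap.comp_apply, mulLast_tmul, LinearMap.rTensor_tmul, LinearMap.lTensor_tmul,
    lamAmb_tmul, LinearEquiv.coe_coe]
  induction βV v with
  | zero => simp
  | tmul w z => simp [TensorProduct.smul_tmul]
  | add s t hs ht => simp only [map_add, TensorProduct.add_tmul, TensorProduct.tmul_add, hs, ht]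

lemma rTensor_lamAmb_coactTrunc_tmul (hβV : IsRightCoaction βV) (h : H) (v : V) :
    (lamAmb k βV).rTensor H (coactTrunc k Δ βV (h ⊗ₜ[k] v)) =
      (LinearMap.mulLeft k h).lTensor V (βV v) := by
  refine (LinearMap.congr_fun (rTensor_lamAmb_comp_mulLast βV) (Δ h ⊗ₜ[k] βV v)).trans ?_
  simp only [LinearMap.comp_apply, LinearMap.lTensor_tmul, LinearEquiv.coe_coe, hβV.coassoc]
  induction βV v with
  | zero => simp
  | tmul w x => simp [← comul_mul]
  | add s t hs ht => simp only [map_add, TensorProduct.tmul_add, hs, ht]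

lemma lamInvAmb_apply (βV : V →ₗ[k] V ⊗[k] H) (v : V) :
    lamInvAmb k βV v = slice ε (mulLast k H H V (Δ 1 ⊗ₜ[k] βV v)) := by
  simp [lamInvAmb, mulLast, slice, LinearMap.lTensor_comp_apply]

lemma Ptrunc_tmul_eq_rhoInvAmb_rhoAmb (hβV : IsRightCoaction βV) (v : V) {h : H}
    (hh : h ∈ Hs k H) :
    Ptrunc k βV Δ (v ⊗ₜ[k] h) = rhoInvAmb k βV (rhoAmb k βV (v ⊗ₜ[k] h)) := by
  rw [Ptrunc_tmul, comul_eq_mul_comul_one hh, mulLast_tmul_one_tmul_mul,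
    ← coaction_rhoAmb_tmul hβV v hh, rhoInvAmb_apply]

lemma Ptrunc_tmul_eq_lamInvAmb_lamAmb (hβV : IsRightCoaction βV) {h : H} (hh : h ∈ Hs k H)
    (v : V) :
    Ptrunc k Δ βV (h ⊗ₜ[k] v) = lamInvAmb k βV (lamAmb k βV (h ⊗ₜ[k] v)) := by
  rw [Ptrunc_tmul, comul_eq_comul_one_mul hh, mulLast_mul_one_tmul_tmul,
    ← coaction_lamAmb_tmul hβV hh v, lamInvAmb_apply]

section SourceComodule

variable {βs : Hs k H →ₗ[k] Hs k H ⊗[k] H}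

lemma coaction_comp_rhoAmb (hβV : IsRightCoaction βV)
    (hβs : (Hs k H).subtype.rTensor H ∘ₗ βs = Δ ∘ₗ (Hs k H).subtype) :
    βV ∘ₗ rhoAmb k βV ∘ₗ (Hs k H).subtype.lTensor V =
      (rhoAmb k βV ∘ₗ (Hs k H).subtype.lTensor V).rTensor H ∘ₗ coactTrunc k βV βs := by
  rw [LinearMap.rTensor_comp, LinearMap.comp_assoc, rTensor_lTensor_comp_coactTrunc βV hβs]
  refine TensorProduct.ext' fun v h => ?_
  exact (coaction_rhoAmb_tmul hβV v h.2).trans (rTensor_rhoAmb_coactTrunc_tmul hβV v h).symm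

lemma coaction_comp_lamAmb (hβV : IsRightCoaction βV)
    (hβs : (Hs k H).subtype.rTensor H ∘ₗ βs = Δ ∘ₗ (Hs k H).subtype) :
    βV ∘ₗ lamAmb k βV ∘ₗ (Hs k H).subtype.rTensor V =
      (lamAmb k βV ∘ₗ (Hs k H).subtype.rTensor V).rTensor H ∘ₗ coactTrunc k βs βV := by
  rw [LinearMap.rTensor_comp, LinearMap.comp_assoc, rTensor_rTensor_comp_coactTrunc βV hβs]
  refine TensorProduct.ext' fun h v => ?_
  exact (coaction_lamAmb_tmul hβV h.2 v).trans (rTensor_lamAmb_coactTrunc_tmul hβV h v).symm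

lemma lTensor_subtype_Ptrunc (hβV : IsRightCoaction βV)
    (hβs : (Hs k H).subtype.rTensor H ∘ₗ βs = Δ ∘ₗ (Hs k H).subtype) (z : V ⊗[k] Hs k H) :
    (Hs k H).subtype.lTensor V (Ptrunc k βV βs z) =
      rhoInvAmb k βV (rhoAmb k βV ((Hs k H).subtype.lTensor V z)) := by
  rw [map_Ptrunc (rTensor_lTensor_comp_coactTrunc βV hβs)]
  induction z with
  | zero => simp
  | tmul v h => exact Ptrunc_tmul_eq_rhoInvAmb_rhoAmb hβV v h.2
  | add y z hy hz => simp only [map_add, hy, hz]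

lemma rTensor_subtype_Ptrunc (hβV : IsRightCoaction βV)
    (hβs : (Hs k H).subtype.rTensor H ∘ₗ βs = Δ ∘ₗ (Hs k H).subtype) (z : Hs k H ⊗[k] V) :
    (Hs k H).subtype.rTensor V (Ptrunc k βs βV z) =
      lamInvAmb k βV (lamAmb k βV ((Hs k H).subtype.rTensor V z)) := by
  rw [map_Ptrunc (rTensor_rTensor_comp_coactTrunc βV hβs)]
  induction z with
  | zero => simp
  | tmul h v => exact Ptrunc_tmul_eq_lamInvAmb_lamAmb hβV h.2 v
  | add y z hy hz => simp only [map_add, hy, hz]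

end SourceComodule

end UnitConstraints

end WeakBialgebra

/-! ### Inverses on the image of an endomorphism -/

lemma inverse_on_range {R A B C : Type*} [Semiring R] [AddCommMonoid A] [Module R A]
    [AddCommMonoid B] [Module R B] [AddCommMonoid C] [Module R C]
    {i : A →ₗ[R] B} {P : A →ₗ[R] A} {f : B →ₗ[R] C} {g : C →ₗ[R] B}
    (hP : ∀ a, i (P a) = g (f (i a))) (hfP : ∀ a, f (i (P a)) = f (i a))
    (hf : ∀ c, ∃ a, f (i a) = c) :
    (∀ c, ∃ z : LinearMap.range P, i z = g c ∧ f (i z) = c) ∧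
      ∀ z : LinearMap.range P, g (f (i z)) = i z := by
  constructor
  · intro c
    obtain ⟨a, rfl⟩ := hf c
    exact ⟨⟨P a, a, rfl⟩, hP a, hfP a⟩
  · rintro ⟨_, a, rfl⟩
    rw [← hP, hP (P a), hfP, hP]

/-- For a right comodule `(V, βV)` of a weak bialgebra over a field,
the unit constraints `λ_V : H_s⊗̂V → V`, `h⊗v ↦ Σ v_V·ε(h·v_H)`, and
`ρ_V : V⊗̂H_s → V`, `v⊗h ↦ Σ v_V·ε(v_H·h)`, are isomorphisms of right `H`-comodules,
with inverses `λ_V⁻¹(v) = Σ (1⁽¹⁾⊗v_V)·ε(1⁽²⁾·v_H)` and `ρ_V⁻¹(v) = Σ v_V ⊗ ε_s(v_H)`.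
Here `H_s` carries the coaction `βs` obtained by restricting `Δ`, and the maps and
their inverses are expressed through the ambient inclusions of the truncated tensor
products. -/
theorem unit_constraints_comodule_isomorphisms [WeakBialgebra k H]
    {V : Type*} [AddCommGroup V] [Module k V]
    (βV : V →ₗ[k] V ⊗[k] H)
    (hV1 : ∀ v : V,
      TensorProduct.rid k V
        ((LinearMap.lTensor V (Coalgebra.counit (R := k) (A := H))) (βV v)) = v)
    (hV2 : ∀ v : V,
      (TensorProduct.assoc k V H H) ((LinearMap.rTensor H βV) (βV v)) =
        (LinearMap.lTensor V (Coalgebra.comul (R := k) (A := H))) (βV v))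
    (βs : ↥(Hs k H) →ₗ[k] ↥(Hs k H) ⊗[k] H)
    (hβs : ∀ x : ↥(Hs k H),
      (LinearMap.rTensor H (Hs k H).subtype) (βs x) = Coalgebra.comul (R := k) (x : H)) :
    -- `λ_V` is a morphism of right `H`-comodules
    (∀ z : ↥(LinearMap.range (Ptrunc k βs βV)),
      βV ((lamAmb k βV) ((LinearMap.rTensor V (Hs k H).subtype)
          ((LinearMap.range (Ptrunc k βs βV)).subtype z))) =
        (LinearMap.rTensor H ((lamAmb k βV) ∘ₗ (LinearMap.rTensor V (Hs k H).subtype)))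
          ((coactTrunc k βs βV) ((LinearMap.range (Ptrunc k βs βV)).subtype z))) ∧
    -- `λ_V` is bijective, with inverse given by `λ_V⁻¹`
    (∀ v : V, ∃ z : ↥(LinearMap.range (Ptrunc k βs βV)),
      (LinearMap.rTensor V (Hs k H).subtype)
          ((LinearMap.range (Ptrunc k βs βV)).subtype z) = lamInvAmb k βV v ∧
      (lamAmb k βV) ((LinearMap.rTensor V (Hs k H).subtype)
          ((LinearMap.range (Ptrunc k βs βV)).subtype z)) = v) ∧
    (∀ z : ↥(LinearMap.range (Ptrunc k βs βV)),
      lamInvAmb k βV ((lamAmb k βV) ((LinearMap.rTensor V (Hs k H).subtype)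
          ((LinearMap.range (Ptrunc k βs βV)).subtype z))) =
        (LinearMap.rTensor V (Hs k H).subtype)
          ((LinearMap.range (Ptrunc k βs βV)).subtype z)) ∧
    -- `ρ_V` is a morphism of right `H`-comodules
    (∀ z : ↥(LinearMap.range (Ptrunc k βV βs)),
      βV ((rhoAmb k βV) ((LinearMap.lTensor V (Hs k H).subtype)
          ((LinearMap.range (Ptrunc k βV βs)).subtype z))) =
        (LinearMap.rTensor H ((rhoAmb k βV) ∘ₗ (LinearMap.lTensor V (Hs k H).subtype)))
          ((coactTrunc k βV βs) ((LinearMap.range (Ptrunc k βV βs)).subtype z))) ∧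
    -- `ρ_V` is bijective, with inverse given by `ρ_V⁻¹`
    (∀ v : V, ∃ z : ↥(LinearMap.range (Ptrunc k βV βs)),
      (LinearMap.lTensor V (Hs k H).subtype)
          ((LinearMap.range (Ptrunc k βV βs)).subtype z) = rhoInvAmb k βV v ∧
      (rhoAmb k βV) ((LinearMap.lTensor V (Hs k H).subtype)
          ((LinearMap.range (Ptrunc k βV βs)).subtype z)) = v) ∧
    (∀ z : ↥(LinearMap.range (Ptrunc k βV βs)),
      rhoInvAmb k βV ((rhoAmb k βV) ((LinearMap.lTensor V (Hs k H).subtype)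
          ((LinearMap.range (Ptrunc k βV βs)).subtype z))) =
        (LinearMap.lTensor V (Hs k H).subtype)
          ((LinearMap.range (Ptrunc k βV βs)).subtype z)) := by
  have hβV : IsRightCoaction βV := ⟨hV1, hV2⟩
  have hβs' : (Hs k H).subtype.rTensor H ∘ₗ βs = Coalgebra.comul ∘ₗ (Hs k H).subtype :=
    LinearMap.ext hβs
  have hlam := WeakBialgebra.coaction_comp_lamAmb hβV hβs'
  have hrho := WeakBialgebra.coaction_comp_rhoAmb hβV hβs'
  obtain ⟨lam_lamInv, lamInv_lam⟩ := inverse_on_range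
    (WeakBialgebra.rTensor_subtype_Ptrunc hβV hβs') (hβV.apply_Ptrunc hlam)
    fun v => ⟨⟨1, WeakBialgebra.one_mem_Hs⟩ ⊗ₜ v, WeakBialgebra.lamAmb_one_tmul hβV v⟩
  obtain ⟨rho_rhoInv, rhoInv_rho⟩ := inverse_on_range
    (WeakBialgebra.lTensor_subtype_Ptrunc hβV hβs') (hβV.apply_Ptrunc hrho)
    fun v => ⟨v ⊗ₜ ⟨1, WeakBialgebra.one_mem_Hs⟩, WeakBialgebra.rhoAmb_tmul_one hβV v⟩
  exact ⟨fun z => LinearMap.congr_fun hlam z, lam_lamInv, lamInv_lam,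
    fun z => LinearMap.congr_fun hrho z, rho_rhoInv, rhoInv_rho⟩
end
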